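/- arXiv:math/0406317 — 3 statements merged into one kernel-verified Lean document; each statement's English description precedes it below -/
import Mathlib

section
/- Assume q is not a root of unity (q½, t½ arbitrary nonzero complex numbers). Then Rad is an A-submodule of V, and if the quotient V' = V/Rad is finite-dimensional over ℂ, then V' is a simple A-module: the only subspaces of V' invariant under the operators induced by T, π and multiplication by X are {0} and V'. -/
noncomputable section

/-- `V = ℂ[X, X⁻¹]`, the space of complex Laurent polynomials. -/
abbrev V : Type := LaurentPolynomial ℂ

/-- The monomial `X ^ m`. -/
def Xm (m : ℤ) : V := LaurentPolynomial.T m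

/-- The radical of the duality pairing. -/
def Rad (pair : V →ₗ[ℂ] V →ₗ[ℂ] ℂ) : Submodule ℂ V := LinearMap.ker pair


theorem Xm_ext {M : Type*} [AddCommMonoid M] [Module ℂ M] {a b : V →ₗ[ℂ] M}
    (h : ∀ m, a (Xm m) = b (Xm m)) : a = b := by
  apply AddMonoidAlgebra.lhom_ext'
  intro m
  ext
  exact h m

theorem Xm_mul (a b : ℤ) : Xm a * Xm b = Xm (a + b) := (LaurentPolynomial.T_add a b).symm

theorem Xm_zero : Xm 0 = 1 := LaurentPolynomial.T_zero

theorem Xm_mem {P : Submodule ℂ V} (h : ∀ m, Xm m ∈ P) (f : V) : f ∈ P := by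
  have : P.mkQ = 0 := Xm_ext (fun m => by simpa using h m)
  have h2 : P.mkQ f = 0 := by rw [this]; rfl
  simpa using h2

/-- Evaluation at `u`. -/
def chi (u : ℂˣ) : V →ₐ[ℂ] ℂ :=
  AddMonoidAlgebra.lift ℂ ℂ ℤ ((Units.coeHom ℂ).comp (zpowersHom ℂˣ u))

theorem chi_Xm (u : ℂˣ) (m : ℤ) : chi u (Xm m) = (u : ℂ) ^ m := by
  simp [chi, Xm, LaurentPolynomial.T, -LaurentPolynomial.single_eq_C_mul_T]

theorem Xm2_ne : Xm 2 - 1 ≠ 0 := by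
  intro h
  have h2 := congrArg (chi (Units.mk0 2 (by norm_num))) h
  simp only [map_sub, chi_Xm, map_one, map_zero, Units.val_mk0] at h2
  norm_num at h2

/-- Substitution `X ↦ a X ^ e`. -/
def sub (a : ℂˣ) (e : ℤ) : V →ₐ[ℂ] V :=
  AddMonoidAlgebra.lift ℂ V ℤ
    { toFun := fun m => ((a : ℂ) ^ m.toAdd) • Xm (e * m.toAdd)
      map_one' := by simp [Xm_zero]
      map_mul' := fun x y => by
        simp [zpow_add₀ a.ne_zero, mul_add, ← Xm_mul, smul_smul, mul_comm] }

theorem sub_Xm (a : ℂˣ) (e m : ℤ) : sub a e (Xm m) = (a : ℂ) ^ m • Xm (e * m) := by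
  simp [sub, Xm, LaurentPolynomial.T, -LaurentPolynomial.single_eq_C_mul_T]

/-- The hypotheses on the operators. -/
structure Setup (q2 t2 : ℂ) (S Top Pi : V →ₗ[ℂ] V) : Prop where
  hq2 : q2 ≠ 0
  ht2 : t2 ≠ 0
  hS : ∀ m : ℤ, S (Xm m) = Xm (-m)
  hPi : ∀ m : ℤ, Pi (Xm m) = q2 ^ m • Xm (-m)
  hT : ∀ f : V, (Xm 2 - 1) * Top f
        = t2 • ((Xm 2 - 1) * S f) + (t2 - t2⁻¹) • (S f - f)

namespace Setup

variable {q2 t2 : ℂ} {S Top Pi : V →ₗ[ℂ] V}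

theorem S_eq (h : Setup q2 t2 S Top Pi) : S = (sub 1 (-1)).toLinearMap := Xm_ext fun m => by
  simp [h.hS, sub_Xm]

theorem Pi_eq (h : Setup q2 t2 S Top Pi) : Pi = (sub (Units.mk0 q2 h.hq2) (-1)).toLinearMap := Xm_ext fun m => by
  simp [h.hPi, sub_Xm]

theorem S_mul (h : Setup q2 t2 S Top Pi) (f g : V) : S (f * g) = S f * S g := by simp [h.S_eq]
theorem S_one (h : Setup q2 t2 S Top Pi) : S 1 = 1 := by simp [h.S_eq]
theorem Pi_mul (h : Setup q2 t2 S Top Pi) (f g : V) : Pi (f * g) = Pi f * Pi g := by simp [h.Pi_eq]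

theorem S_S (h : Setup q2 t2 S Top Pi) (f : V) : S (S f) = f := by
  have : S ∘ₗ S = LinearMap.id := Xm_ext fun m => by simp [h.hS]
  exact LinearMap.congr_fun this f

theorem Pi_Pi (h : Setup q2 t2 S Top Pi) (f : V) : Pi (Pi f) = f := by
  have : Pi ∘ₗ Pi = LinearMap.id := Xm_ext fun m => by
    simp [h.hPi, smul_smul, zpow_ne_zero m h.hq2]
  exact LinearMap.congr_fun this f

theorem chi_S (h : Setup q2 t2 S Top Pi) (u : ℂˣ) (f : V) : chi u (S f) = chi u⁻¹ f := by
  have : (chi u).toLinearMap ∘ₗ S = (chi u⁻¹).toLinearMap := Xm_ext fun m => by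
    simp [h.hS, chi_Xm]
  exact LinearMap.congr_fun this f

theorem chi_Pi (h : Setup q2 t2 S Top Pi) (u : ℂˣ) (f : V) :
    chi u (Pi f) = chi (Units.mk0 q2 h.hq2 * u⁻¹) f := by
  have : (chi u).toLinearMap ∘ₗ Pi = (chi (Units.mk0 q2 h.hq2 * u⁻¹)).toLinearMap :=
    Xm_ext fun m => by simp [h.hPi, chi_Xm, mul_zpow]
  exact LinearMap.congr_fun this f

theorem key (h : Setup q2 t2 S Top Pi) (f : V) : (Xm 2 - 1) * S (Top f) =
    algebraMap ℂ V t2 * (Xm 2 - 1) * f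
      - algebraMap ℂ V (t2 - t2⁻¹) * Xm 2 * (f - S f) := by
  have h2 := congrArg S (h.hT f)
  simp only [map_add, map_smul, map_sub, h.S_mul, h.S_S, h.hS, h.S_one] at h2
  simp only [Algebra.smul_def, map_sub] at h2
  have hx : Xm 2 * Xm (-2) = 1 := by rw [Xm_mul]; exact Xm_zero
  rw [map_sub]
  linear_combination (-Xm 2) * h2 + (S (Top f) - algebraMap ℂ V t2 * f) * hx

theorem tt (h : Setup q2 t2 S Top Pi) : algebraMap ℂ V t2 * algebraMap ℂ V t2⁻¹ = 1 := by
  rw [← map_mul, mul_inv_cancel₀ h.ht2, map_one]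

theorem quad (h : Setup q2 t2 S Top Pi) (f : V) : Top (Top f) = (t2 - t2⁻¹) • Top f + f := by
  have h1 := h.hT f
  have h2 := h.key f
  have h3 := h.hT (Top f)
  have h4 := h.tt
  simp only [Algebra.smul_def, map_sub] at h1 h2 h3 ⊢
  apply mul_left_cancel₀ (pow_ne_zero 2 Xm2_ne)
  generalize algebraMap ℂ V t2 = T at *
  generalize algebraMap ℂ V t2⁻¹ = T' at *
  linear_combination (Xm 2 - 1) * h3 + (T * Xm 2 - T') * h2 - (T - T') * Xm 2 * h1
    + (Xm 2 - 1) ^ 2 * f * h4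

theorem TXT (h : Setup q2 t2 S Top Pi) (f : V) : Top (Xm 1 * Top f) = Xm (-1) * f := by
  have h1 := h.hT f
  have h2 := h.key f
  have h3 := h.hT (Xm 1 * Top f)
  have h4 := h.tt
  have hx : Xm 1 * Xm (-1) = 1 := by rw [Xm_mul]; exact Xm_zero
  have hy : Xm 2 = Xm 1 ^ 2 := by rw [sq, Xm_mul]; rfl
  rw [h.S_mul, h.hS] at h3
  apply mul_left_cancel₀ (pow_ne_zero 2 Xm2_ne)
  rw [hy] at h1 h2 h3 ⊢
  simp only [Algebra.smul_def, map_sub] at h1 h2 h3 ⊢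
  generalize algebraMap ℂ V t2 = T at *
  generalize algebraMap ℂ V t2⁻¹ = T' at *
  linear_combination (Xm 1 ^ 2 - 1) * h3 + (T * Xm 1 ^ 2 - T') * Xm (-1) * h2
    - (T - T') * Xm 1 ^ 2 * Xm (-1) * h1
    + (Xm 1 ^ 2 - 1) ^ 2 * f * Xm (-1) * h4
    + (T - T') * Xm 1 * (Xm 1 ^ 2 - 1) * Top f * hx

theorem T_one (h : Setup q2 t2 S Top Pi) : Top 1 = algebraMap ℂ V t2 := by
  apply mul_left_cancel₀ Xm2_ne
  rw [h.hT, h.S_one, Algebra.smul_def, sub_self, smul_zero]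
  ring

theorem chi_T (h : Setup q2 t2 S Top Pi) (f : V) : chi (Units.mk0 t2 h.ht2)⁻¹ (Top f) =
    t2 * chi (Units.mk0 t2 h.ht2)⁻¹ f := by
  have ht := h.ht2
  by_cases hc : t2 ^ 2 = 1
  · have hi : t2⁻¹ = t2 := by field_simp; exact hc.symm
    have : Top f = t2 • S f := by
      apply mul_left_cancel₀ Xm2_ne
      rw [h.hT, hi]
      simp
    rw [this, map_smul, h.chi_S, smul_eq_mul, inv_inv]
    congr 3
    ext
    simp [hi]
  · have h1 := congrArg (chi (Units.mk0 t2 h.ht2)⁻¹) (h.hT f)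
    simp only [map_mul, map_add, map_sub, map_smul, map_one, chi_Xm, smul_eq_mul,
      Units.val_inv_eq_inv_val, Units.val_mk0] at h1
    have h0 : (t2⁻¹ ^ (2 : ℤ) - 1 : ℂ) ≠ 0 := by
      intro h0
      apply hc
      have : (t2⁻¹ ^ (2 : ℤ) : ℂ) = (t2 ^ 2)⁻¹ := by
        rw [inv_zpow]; rfl
      rw [this, sub_eq_zero, inv_eq_one] at h0
      exact h0
    apply mul_left_cancel₀ h0
    rw [h1]
    have : (t2⁻¹ ^ (2 : ℤ) : ℂ) = (t2⁻¹) ^ 2 := rfl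
    rw [this]
    field_simp
    ring

theorem T_inj (h : Setup q2 t2 S Top Pi) {f g : V} (hfg : Top f = Top g) : f = g := by
  have h1 := h.quad f
  have h2 := h.quad g
  rw [hfg] at h1
  rw [h1] at h2
  exact add_left_cancel h2

end Setup

theorem Xm_iff_induction {P : V → Prop} (h1 : P 1) (h : ∀ f, P f ↔ P (Xm 1 * f)) (m : ℤ) :
    P (Xm m) := by
  induction m using Int.induction_on with
  | zero => rw [Xm_zero]; exact h1
  | succ n ih => rw [h, Xm_mul, add_comm] at ih; exact ih
  | pred n ih =>
    rw [h, Xm_mul]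
    convert ih using 2
    ring

theorem chi_sg (u : ℂˣ) (f : V) : chi u (sub (-1) 1 f) = chi (-u) f := by
  have : (chi u).toLinearMap ∘ₗ (sub (-1) 1).toLinearMap = (chi (-u)).toLinearMap :=
    Xm_ext fun m => by
      simp [sub_Xm, chi_Xm, ← mul_zpow]
  exact LinearMap.congr_fun this f

/-- The hypotheses on the pairing. -/
structure Setup2 (q2 t2 : ℂ) (S Top Pi Y : V →ₗ[ℂ] V) (ev : V →ₗ[ℂ] ℂ)
    (Yz : ℤ → V →ₗ[ℂ] V) (pair : V →ₗ[ℂ] V →ₗ[ℂ] ℂ) : Prop extends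
    Setup q2 t2 S Top Pi where
  hY : Y = Pi ∘ₗ Top
  hev : ∀ m : ℤ, ev (Xm m) = t2 ^ (-m)
  hYz0 : Yz 0 = LinearMap.id
  hYz1 : Yz 1 = Y
  hYzadd : ∀ a b : ℤ, Yz (a + b) = Yz a ∘ₗ Yz b
  hpair : ∀ (m : ℤ) (g : V), pair (Xm m) g = ev (Yz (-m) g)

namespace Setup2

variable {q2 t2 : ℂ} {S Top Pi Y : V →ₗ[ℂ] V} {ev : V →ₗ[ℂ] ℂ}
    {Yz : ℤ → V →ₗ[ℂ] V} {pair : V →ₗ[ℂ] V →ₗ[ℂ] ℂ}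

theorem Y_apply (h : Setup2 q2 t2 S Top Pi Y ev Yz pair) (f : V) : Y f = Pi (Top f) := by rw [h.hY]; rfl

theorem Yi_Y (h : Setup2 q2 t2 S Top Pi Y ev Yz pair) (f : V) : Yz (-1) (Y f) = f := by
  have := h.hYzadd (-1) 1
  rw [neg_add_cancel, h.hYz0, h.hYz1] at this
  exact (LinearMap.congr_fun this f).symm

theorem Y_Yi (h : Setup2 q2 t2 S Top Pi Y ev Yz pair) (f : V) : Y (Yz (-1) f) = f := by
  have := h.hYzadd 1 (-1)
  rw [add_neg_cancel, h.hYz0, h.hYz1] at this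
  exact (LinearMap.congr_fun this f).symm

theorem T_Ti (h : Setup2 q2 t2 S Top Pi Y ev Yz pair) (f : V) : Top (Top f - (t2 - t2⁻¹) • f) = f := by
  rw [map_sub, map_smul, h.quad]; simp

theorem Yi_apply (h : Setup2 q2 t2 S Top Pi Y ev Yz pair) (f : V) : Yz (-1) f = Top (Pi f) - (t2 - t2⁻¹) • Pi f := by
  have : f = Y (Top (Pi f) - (t2 - t2⁻¹) • Pi f) := by
    rw [h.Y_apply, h.T_Ti, h.Pi_Pi]
  conv_lhs => rw [this]
  rw [h.Yi_Y]

theorem T_Yi (h : Setup2 q2 t2 S Top Pi Y ev Yz pair) (f : V) : Top (Yz (-1) f) = Pi f := by rw [h.Yi_apply, h.T_Ti]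

theorem ev_eq (h : Setup2 q2 t2 S Top Pi Y ev Yz pair) : ev = (chi (Units.mk0 t2 h.ht2)⁻¹).toLinearMap := Xm_ext fun m => by
  simp [h.hev, chi_Xm]

theorem ev_T (h : Setup2 q2 t2 S Top Pi Y ev Yz pair) (f : V) : ev (Top f) = t2 * ev f := by
  rw [h.ev_eq]; exact h.chi_T f

theorem ev_X (h : Setup2 q2 t2 S Top Pi Y ev Yz pair) (f : V) : ev (Xm 1 * f) = t2⁻¹ * ev f := by
  rw [h.ev_eq]; simp [chi_Xm]

theorem pX (h : Setup2 q2 t2 S Top Pi Y ev Yz pair) (f g : V) : pair (Xm 1 * f) g = pair f (Yz (-1) g) := by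
  have : pair.flip g ∘ₗ LinearMap.mulLeft ℂ (Xm 1) = pair.flip (Yz (-1) g) :=
    Xm_ext fun m => by
      simp only [LinearMap.comp_apply, LinearMap.mulLeft_apply, LinearMap.flip_apply, Xm_mul,
        h.hpair]
      rw [neg_add_rev, h.hYzadd]; rfl
  exact LinearMap.congr_fun this f

theorem pXi (h : Setup2 q2 t2 S Top Pi Y ev Yz pair) (f g : V) : pair (Xm (-1) * f) g = pair f (Y g) := by
  rw [← h.Yi_Y g, ← h.pX, ← mul_assoc, Xm_mul, h.Yi_Y]
  simp [Xm_zero]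

theorem p1 (h : Setup2 q2 t2 S Top Pi Y ev Yz pair) (g : V) : pair 1 g = ev g := by
  rw [← Xm_zero, h.hpair, neg_zero, h.hYz0]; rfl

theorem TX (h : Setup2 q2 t2 S Top Pi Y ev Yz pair) (f : V) : Top (Xm 1 * f) = Xm (-1) * (Top f - (t2 - t2⁻¹) • f) := by
  rw [← h.TXT, h.T_Ti]

theorem Yi_X (h : Setup2 q2 t2 S Top Pi Y ev Yz pair) (f : V) : Yz (-1) (Xm 1 * f) = q2 • (Xm 1 * Top (Pi f)) := by
  apply h.T_inj
  rw [h.T_Yi, map_smul, h.TXT, h.Pi_mul, h.hPi]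
  simp

theorem pT (h : Setup2 q2 t2 S Top Pi Y ev Yz pair) (f g : V) : pair (Top f) g = pair f (Top g) := by
  have key : ∀ m, ∀ g, pair (Top (Xm m)) g = pair (Xm m) (Top g) := by
    apply Xm_iff_induction (P := fun f => ∀ g, pair (Top f) g = pair f (Top g))
    · intro g
      rw [h.T_one, h.p1, h.ev_T, Algebra.algebraMap_eq_smul_one, map_smul, LinearMap.smul_apply,
        h.p1, smul_eq_mul]
    · intro f
      have e : ∀ g, pair (Top (Xm 1 * f)) g = pair (Xm 1 * f) (Top g) ↔
          pair (Top f) (Y g) = pair f (Top (Y g)) := by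
        intro g
        rw [h.TX, h.pXi, h.pX, h.Yi_apply, ← h.Y_apply]
        simp only [map_sub, map_smul, LinearMap.sub_apply, LinearMap.smul_apply]
        exact sub_left_inj
      constructor
      · intro H g
        exact (e g).2 (H _)
      · intro H g
        have := (e (Yz (-1) g)).1 (H _)
        rwa [h.Y_Yi] at this
  have : pair.flip g ∘ₗ Top = pair.flip (Top g) := Xm_ext fun m => key m g
  exact LinearMap.congr_fun this f

theorem Yi_one (h : Setup2 q2 t2 S Top Pi Y ev Yz pair) : Yz (-1) 1 = t2⁻¹ • (1 : V) := by
  have : Y 1 = t2 • (1 : V) := by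
    have := h.hPi 0
    rw [neg_zero, Xm_zero, zpow_zero, one_smul] at this
    rw [h.Y_apply, h.T_one, Algebra.algebraMap_eq_smul_one, map_smul, this]
  have h2 := h.Yi_Y 1
  rw [this, map_smul] at h2
  rw [← h2, smul_smul, inv_mul_cancel₀ h.ht2, h2, one_smul]

theorem pYi (h : Setup2 q2 t2 S Top Pi Y ev Yz pair) (f g : V) : pair (Yz (-1) f) g = pair f (Xm 1 * g) := by
  have key : ∀ m, ∀ g, pair (Yz (-1) (Xm m)) g = pair (Xm m) (Xm 1 * g) := by
    apply Xm_iff_induction (P := fun f => ∀ g, pair (Yz (-1) f) g = pair f (Xm 1 * g))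
    · intro g
      rw [h.Yi_one, h.p1, h.ev_X, map_smul, LinearMap.smul_apply, h.p1, smul_eq_mul]
    · intro f
      have e : ∀ g, pair (Yz (-1) (Xm 1 * f)) g = pair (Xm 1 * f) (Xm 1 * g) ↔
          pair (Yz (-1) f) (Top (Pi g)) = pair f (Xm 1 * Top (Pi g)) := by
        intro g
        rw [h.Yi_X, h.pX, h.Yi_X, map_smul, map_smul, LinearMap.smul_apply, h.pX,
          h.pT, ← h.T_Yi f, h.pT, h.T_Yi]
        simp [h.hq2]
      constructor
      · intro H g
        exact (e g).2 (H _)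
      · intro H g
        have := (e (Pi (Top g - (t2 - t2⁻¹) • g))).1 (H _)
        rwa [h.Pi_Pi, h.T_Ti] at this
  have : pair.flip g ∘ₗ Yz (-1) = pair.flip (Xm 1 * g) := Xm_ext fun m => key m g
  exact LinearMap.congr_fun this f

theorem p_one (h : Setup2 q2 t2 S Top Pi Y ev Yz pair) (f : V) : pair f 1 = ev f := by
  have : pair.flip 1 = ev := Xm_ext <| by
    apply Xm_iff_induction (P := fun f => pair.flip 1 f = ev f)
    · exact h.p1 1
    · intro f
      rw [LinearMap.flip_apply, LinearMap.flip_apply, h.pX, h.ev_X, h.Yi_one, map_smul,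
        smul_eq_mul]
      simp [h.ht2]
  exact LinearMap.congr_fun this f

theorem p_symm (h : Setup2 q2 t2 S Top Pi Y ev Yz pair) (f g : V) : pair f g = pair g f := by
  have key : ∀ m, ∀ g, pair g (Xm m) = pair (Xm m) g := by
    apply Xm_iff_induction (P := fun f => ∀ g, pair g f = pair f g)
    · intro g
      rw [h.p_one, h.p1]
    · intro f
      constructor
      · intro H g
        rw [← h.pYi, h.pX, H]
      · intro H g
        have := H (Y g)
        rwa [← h.pYi, h.pX, h.Yi_Y] at this
  have : pair.flip g = pair g := Xm_ext fun m => (key m g).symm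
  exact LinearMap.congr_fun this f

theorem rad_T (h : Setup2 q2 t2 S Top Pi Y ev Yz pair) {f : V} (hf : f ∈ Rad pair) : Top f ∈ Rad pair := by
  have hf : pair f = 0 := hf
  change pair (Top f) = 0
  refine LinearMap.ext fun g => ?_
  rw [h.pT, hf]; rfl

theorem rad_X (h : Setup2 q2 t2 S Top Pi Y ev Yz pair) {f : V} (hf : f ∈ Rad pair) : Xm 1 * f ∈ Rad pair := by
  have hf : pair f = 0 := hf
  change pair (Xm 1 * f) = 0
  refine LinearMap.ext fun g => ?_
  rw [h.pX, hf]; rfl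

theorem rad_Pi (h : Setup2 q2 t2 S Top Pi Y ev Yz pair) {f : V} (hf : f ∈ Rad pair) : Pi f ∈ Rad pair := by
  rw [← h.T_Yi]
  apply h.rad_T
  have hf : pair f = 0 := hf
  change pair (Yz (-1) f) = 0
  refine LinearMap.ext fun g => ?_
  rw [h.pYi, hf]; rfl

theorem rad_of (h : Setup2 q2 t2 S Top Pi Y ev Yz pair) {f : V} (hf : ∀ m, ev (Yz m f) = 0) : f ∈ Rad pair := by
  change pair f = 0
  refine Xm_ext fun m => ?_
  rw [h.p_symm, h.hpair, hf]; rfl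

theorem Yz_mem (h : Setup2 q2 t2 S Top Pi Y ev Yz pair) {M : Submodule ℂ V} (hT : ∀ f ∈ M, Top f ∈ M) (hP : ∀ f ∈ M, Pi f ∈ M)
    (m : ℤ) : ∀ f ∈ M, Yz m f ∈ M := by
  induction m using Int.induction_on with
  | zero => rw [h.hYz0]; exact fun f hf => hf
  | succ n ih =>
    intro f hf
    rw [h.hYzadd, h.hYz1, LinearMap.comp_apply, h.Y_apply]
    exact ih _ (hP _ (hT _ hf))
  | pred n ih =>
    intro f hf
    rw [sub_eq_add_neg, h.hYzadd, LinearMap.comp_apply, h.Yi_apply]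
    exact ih _ (M.sub_mem (hT _ (hP _ hf)) (M.smul_mem _ (hP _ hf)))

theorem sg_Pi (h : Setup2 q2 t2 S Top Pi Y ev Yz pair) (f : V) : sub (-1) 1 (Pi f) = Pi (sub (-1) 1 f) := by
  have : (sub (-1) 1).toLinearMap ∘ₗ Pi = Pi ∘ₗ (sub (-1) 1).toLinearMap := Xm_ext fun m => by
    have e : ((-1 : ℂ) ^ m)⁻¹ = (-1) ^ m := by rw [← inv_zpow]; norm_num
    simp [h.hPi, sub_Xm, smul_smul, mul_comm, e]
  exact LinearMap.congr_fun this f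

theorem sg_S (h : Setup2 q2 t2 S Top Pi Y ev Yz pair) (f : V) : sub (-1) 1 (S f) = S (sub (-1) 1 f) := by
  have : (sub (-1) 1).toLinearMap ∘ₗ S = S ∘ₗ (sub (-1) 1).toLinearMap := Xm_ext fun m => by
    have e : ((-1 : ℂ) ^ m)⁻¹ = (-1) ^ m := by rw [← inv_zpow]; norm_num
    simp [h.hS, sub_Xm, e]
  exact LinearMap.congr_fun this f

theorem sg_T (h : Setup2 q2 t2 S Top Pi Y ev Yz pair) (f : V) : sub (-1) 1 (Top f) = Top (sub (-1) 1 f) := by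
  apply mul_left_cancel₀ Xm2_ne
  rw [h.hT, ← h.sg_S]
  have h2 : sub (-1) 1 (Xm 2) = Xm 2 := by
    rw [sub_Xm]
    have : (((-1 : ℂˣ) : ℂ) ^ (2 : ℤ)) = 1 := by norm_num
    rw [this, one_smul, one_mul]
  have h1 := congrArg (sub (-1) 1) (h.hT f)
  simpa only [map_mul, map_add, map_smul, map_sub, map_one, h2] using h1

theorem sg_Yz (h : Setup2 q2 t2 S Top Pi Y ev Yz pair) (m : ℤ) : ∀ f, sub (-1) 1 (Yz m f) = Yz m (sub (-1) 1 f) := by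
  induction m using Int.induction_on with
  | zero => rw [h.hYz0]; exact fun f => rfl
  | succ n ih =>
    intro f
    rw [h.hYzadd, h.hYz1, LinearMap.comp_apply, LinearMap.comp_apply, h.Y_apply, h.Y_apply, ih,
      h.sg_Pi, h.sg_T]
  | pred n ih =>
    intro f
    rw [sub_eq_add_neg, h.hYzadd, LinearMap.comp_apply, LinearMap.comp_apply, h.Yi_apply,
      h.Yi_apply, ih, map_sub, map_smul, h.sg_T, h.sg_Pi]

end Setup2

/-- Multiplication by `X` on a quotient, transposed; it has an eigenvector. -/
theorem exists_chi (M : Submodule ℂ V) (hM : M ≠ ⊤) [FiniteDimensional ℂ (V ⧸ M)]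
    (hX : M ≤ M.comap (LinearMap.mulLeft ℂ (Xm 1))) :
    ∃ u : ℂˣ, ∀ f ∈ M, chi u f = 0 := by
  have : Nontrivial (V ⧸ M) := Submodule.Quotient.nontrivial_iff.2 hM
  obtain ⟨μ, hμ⟩ := Module.End.exists_eigenvalue
    (Module.Dual.transpose (R := ℂ) (M.mapQ M (LinearMap.mulLeft ℂ (Xm 1)) hX))
  obtain ⟨φ, hφ⟩ := hμ.exists_hasEigenvector
  have hne := hφ.2
  have he : ∀ f, φ (M.mkQ (Xm 1 * f)) = μ * φ (M.mkQ f) := fun f =>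
    LinearMap.congr_fun hφ.apply_eq_smul (M.mkQ f)
  have hμ0 : μ ≠ 0 := by
    rintro rfl
    apply hne
    refine LinearMap.ext fun v => ?_
    obtain ⟨f, rfl⟩ := M.mkQ_surjective v
    have := he (Xm (-1) * f)
    rw [← mul_assoc, Xm_mul, add_neg_cancel, Xm_zero, one_mul, zero_mul] at this
    exact this
  have key : φ ∘ₗ M.mkQ = φ (M.mkQ 1) • (chi (Units.mk0 μ hμ0)).toLinearMap := Xm_ext <| by
    apply Xm_iff_induction (P := fun f => (φ ∘ₗ M.mkQ) f =
      (φ (M.mkQ 1) • (chi (Units.mk0 μ hμ0)).toLinearMap) f)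
    · simp
    · intro f
      have := he f
      simp only [LinearMap.comp_apply, LinearMap.smul_apply, AlgHom.toLinearMap_apply, map_mul,
        chi_Xm, smul_eq_mul, this, zpow_one, Units.val_mk0]
      rw [mul_left_comm, mul_right_inj' hμ0]
  have h1 : φ (M.mkQ 1) ≠ 0 := by
    intro h0
    apply hne
    refine LinearMap.ext fun v => ?_
    obtain ⟨f, rfl⟩ := M.mkQ_surjective v
    have := LinearMap.congr_fun key f
    rw [h0, zero_smul] at this
    exact this
  refine ⟨Units.mk0 μ hμ0, fun f hf => ?_⟩
  have := LinearMap.congr_fun key f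
  have h0 : M.mkQ f = 0 := by simpa using hf
  rw [LinearMap.comp_apply, h0, map_zero] at this
  exact (mul_eq_zero.1 this.symm).resolve_left h1

theorem finite_chi (M : Submodule ℂ V) [FiniteDimensional ℂ (V ⧸ M)]
    (hX : M ≤ M.comap (LinearMap.mulLeft ℂ (Xm 1))) :
    {u : ℂˣ | ∀ f ∈ M, chi u f = 0}.Finite := by
  have hfin := Module.End.finite_hasEigenvalue
    (Module.Dual.transpose (R := ℂ) (M.mapQ M (LinearMap.mulLeft ℂ (Xm 1)) hX))
  refine Set.Finite.of_finite_image (f := fun u : ℂˣ => (u : ℂ)) (hfin.subset ?_)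
    (Units.val_injective.injOn)
  rintro _ ⟨u, hu, rfl⟩
  let φ : Module.Dual ℂ (V ⧸ M) := M.liftQ (chi u).toLinearMap hu
  have h2 : ∀ f, φ (M.mkQ f) = chi u f := fun f => rfl
  refine Module.End.hasEigenvalue_of_hasEigenvector (x := φ) ⟨?_, ?_⟩
  · rw [Module.End.mem_eigenspace_iff]
    refine LinearMap.ext fun v => ?_
    obtain ⟨f, rfl⟩ := M.mkQ_surjective v
    change φ (M.mkQ (Xm 1 * f)) = (u : ℂ) * φ (M.mkQ f)
    rw [h2, h2, map_mul, chi_Xm, zpow_one]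
  · intro h0
    have := h2 1
    rw [h0, map_one (chi u)] at this
    exact zero_ne_one this

theorem Setup2.main {q2 t2 : ℂ} {S Top Pi Y : V →ₗ[ℂ] V} {ev : V →ₗ[ℂ] ℂ}
    {Yz : ℤ → V →ₗ[ℂ] V} {pair : V →ₗ[ℂ] V →ₗ[ℂ] ℂ}
    (h : Setup2 q2 t2 S Top Pi Y ev Yz pair)
    (hqnr : ∀ n : ℕ, 0 < n → (q2 ^ 2) ^ n ≠ 1)
    (M : Submodule ℂ V) [FiniteDimensional ℂ (V ⧸ M)] (hR : Rad pair ≤ M)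
    (hT : ∀ f ∈ M, Top f ∈ M) (hP : ∀ f ∈ M, Pi f ∈ M) (hX : ∀ f ∈ M, Xm 1 * f ∈ M) :
    M ≤ Rad pair ∨ M = ⊤ := by
  by_contra hcon
  push Not at hcon
  obtain ⟨hMR, hM⟩ := hcon
  set l : ℂˣ := (Units.mk0 t2 h.ht2)⁻¹ with hl
  have hev : ∀ f, ev f = chi l f := fun f => by rw [h.ev_eq]; rfl
  obtain ⟨u, hu⟩ := exists_chi M hM hX
  have hfin := finite_chi M hX
  set Z : Set ℂˣ := {u : ℂˣ | ∀ f ∈ M, chi u f = 0} with hZ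
  -- the evaluation point is not a common zero
  have hlZ : l ∉ Z := by
    intro hlZ
    apply hMR
    intro f hf
    apply h.rad_of
    intro m
    rw [hev]
    exact hlZ _ (h.Yz_mem hT hP m f hf)
  -- neither is its opposite
  have hlZ' : -l ∉ Z := by
    intro hlZ'
    apply hlZ
    intro f hf
    have h1 : sub (-1) 1 f ∈ M := by
      apply hR
      apply h.rad_of
      intro m
      rw [← h.sg_Yz, hev, chi_sg]
      exact hlZ' _ (h.Yz_mem hT hP m f hf)
    have h2 := hlZ' _ h1
    rwa [chi_sg, neg_neg] at h2
  have step : ∀ v ∈ Z, Units.mk0 q2 h.hq2 * v ∈ Z := by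
    intro v hv
    have h1 : v⁻¹ ∈ Z := by
      intro f hf
      have e := congrArg (chi v) (h.hT f)
      simp only [map_mul, map_add, map_sub, map_smul, map_one, chi_Xm, smul_eq_mul,
        h.chi_S, hv f hf, hv _ (hT f hf)] at e
      have e2 : (t2 * (v : ℂ) ^ 2 - t2⁻¹) * chi v⁻¹ f = 0 := by
        have : ((v : ℂ) ^ (2 : ℤ)) = (v : ℂ) ^ 2 := rfl
        rw [this] at e
        linear_combination -e
      rcases mul_eq_zero.1 e2 with e3 | e3
      · exfalso
        have e4 : (v : ℂ) ^ 2 = (l : ℂ) ^ 2 := by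
          have := h.ht2
          simp only [hl, Units.val_inv_eq_inv_val, Units.val_mk0]
          field_simp
          field_simp at e3
          linear_combination e3
        rcases sq_eq_sq_iff_eq_or_eq_neg.1 e4 with e5 | e5
        · exact hlZ (by rwa [← Units.ext e5])
        · have : v = -l := Units.ext (by simpa using e5)
          exact hlZ' (by rwa [← this])
      · exact e3
    intro f hf
    have := h1 _ (hP f hf)
    rwa [h.chi_Pi, inv_inv] at this
  have all : ∀ n : ℕ, Units.mk0 q2 h.hq2 ^ n * u ∈ Z := by
    intro n
    induction n with
    | zero => rw [pow_zero, one_mul]; exact hu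
    | succ n ih =>
      rw [pow_succ', mul_assoc]
      exact step _ ih
  refine Set.infinite_of_injective_forall_mem (f := fun n : ℕ => Units.mk0 q2 h.hq2 ^ n * u)
    ?_ all hfin
  have hinj : Function.Injective fun n : ℕ => Units.mk0 q2 h.hq2 ^ n := by
    rw [injective_pow_iff_not_isOfFinOrder, isOfFinOrder_iff_pow_eq_one]
    rintro ⟨n, hn, e⟩
    apply hqnr n hn
    have := congrArg (fun x : ℂˣ => (x : ℂ)) e
    simp only [Units.val_pow_eq_pow_val, Units.val_mk0, Units.val_one] at this
    rw [← pow_mul, mul_comm, pow_mul, this, one_pow]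
  intro a b hab
  exact hinj (mul_right_cancel hab)

/-- if `q` is not a root of unity, then `Rad` is an `A`-submodule
of `V` (invariant under `T`, `π` and multiplication by `X`), and if the
quotient `V' = V/Rad` is finite dimensional over `ℂ` then it is a simple
`A`-module: the only subspaces of `V'` invariant under the operators induced
by `T`, `π` and multiplication by `X` are `{0}` and `V'`. -/
theorem stmt0
    (q2 t2 : ℂ) (hq2 : q2 ≠ 0) (ht2 : t2 ≠ 0)
    (S Top Pi Y : V →ₗ[ℂ] V)
    (hS : ∀ m : ℤ, S (Xm m) = Xm (-m))
    (hPi : ∀ m : ℤ, Pi (Xm m) = q2 ^ m • Xm (-m))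
    (hT : ∀ f : V, (Xm 2 - 1) * Top f
        = t2 • ((Xm 2 - 1) * S f) + (t2 - t2⁻¹) • (S f - f))
    (hY : Y = Pi ∘ₗ Top)
    (ev : V →ₗ[ℂ] ℂ) (hev : ∀ m : ℤ, ev (Xm m) = t2 ^ (-m))
    (Yz : ℤ → V →ₗ[ℂ] V)
    (hYz0 : Yz 0 = LinearMap.id) (hYz1 : Yz 1 = Y)
    (hYzadd : ∀ a b : ℤ, Yz (a + b) = Yz a ∘ₗ Yz b)
    (pair : V →ₗ[ℂ] V →ₗ[ℂ] ℂ)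
    (hpair : ∀ (m : ℤ) (g : V), pair (Xm m) g = ev (Yz (-m) g))
    (hqnr : ∀ n : ℕ, 0 < n → (q2 ^ 2) ^ n ≠ 1) :
    (∀ f ∈ Rad pair, Top f ∈ Rad pair ∧ Pi f ∈ Rad pair ∧ Xm 1 * f ∈ Rad pair) ∧
    ∃ (hT' : Rad pair ≤ (Rad pair).comap Top)
      (hP' : Rad pair ≤ (Rad pair).comap Pi)
      (hX' : Rad pair ≤ (Rad pair).comap (LinearMap.mulLeft ℂ (Xm 1))),
      FiniteDimensional ℂ (V ⧸ Rad pair) →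
      ∀ W : Submodule ℂ (V ⧸ Rad pair),
        (∀ v ∈ W, (Rad pair).mapQ (Rad pair) Top hT' v ∈ W ∧
            (Rad pair).mapQ (Rad pair) Pi hP' v ∈ W ∧
            (Rad pair).mapQ (Rad pair) (LinearMap.mulLeft ℂ (Xm 1)) hX' v ∈ W) →
        W = ⊥ ∨ W = ⊤ := by
  have h : Setup2 q2 t2 S Top Pi Y ev Yz pair :=
    { hq2 := hq2, ht2 := ht2, hS := hS, hPi := hPi, hT := hT, hY := hY, hev := hev,
      hYz0 := hYz0, hYz1 := hYz1, hYzadd := hYzadd, hpair := hpair }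
  refine ⟨fun f hf => ⟨h.rad_T hf, h.rad_Pi hf, h.rad_X hf⟩,
    fun f hf => h.rad_T hf, fun f hf => h.rad_Pi hf, fun f hf => h.rad_X hf, ?_⟩
  intro hfd W hW
  let M : Submodule ℂ V := W.comap (Rad pair).mkQ
  have hR : Rad pair ≤ M := by
    intro f hf
    change (Rad pair).mkQ f ∈ W
    have : (Rad pair).mkQ f = 0 := by simpa using hf
    rw [this]
    exact W.zero_mem
  have : FiniteDimensional ℂ (V ⧸ M) :=
    Module.Finite.of_surjective (Submodule.factor hR) (Submodule.factor_surjective hR)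
  have hmap : W = M.map (Rad pair).mkQ :=
    (Submodule.map_comap_eq_of_surjective (Rad pair).mkQ_surjective W).symm
  rcases h.main hqnr M hR (fun f hf => (hW _ hf).1) (fun f hf => (hW _ hf).2.1)
    (fun f hf => (hW _ hf).2.2) with h1 | h1
  · left
    rw [eq_bot_iff, hmap]
    rintro _ ⟨f, hf, rfl⟩
    simpa using h1 hf
  · right
    rw [hmap, h1, Submodule.map_top, Submodule.range_mkQ]
end
end

section
/- Rad is an A-invariant subspace of V, the quotient V' = V/Rad has ℂ-dimension 2N + 4|k|, and V' is a simple A-module: the only subspaces of V' invariant under the operators induced by T, π and multiplication by X are {0} and V'. -/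
noncomputable section

theorem Xm_add (a b : ℤ) : Xm (a + b) = Xm a * Xm b := LaurentPolynomial.T_add a b

theorem V_induct {p : V → Prop} (hX : ∀ m, p (Xm m)) (hadd : ∀ f g, p f → p g → p (f + g))
    (hsmul : ∀ (a : ℂ) f, p f → p (a • f)) (f : V) : p f := by
  induction f using LaurentPolynomial.induction_on' with
  | add f g hf hg => exact hadd _ _ hf hg
  | C_mul_T n a =>
    rw [← LaurentPolynomial.smul_eq_C_mul]
    exact hsmul _ _ (hX n)

theorem V_ext {W : Type*} [AddCommMonoid W] [Module ℂ W] {A B : V →ₗ[ℂ] W}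
    (h : ∀ m, A (Xm m) = B (Xm m)) (f : V) : A f = B f := by
  induction f using V_induct with
  | hX m => exact h m
  | hadd f g hf hg => rw [map_add, map_add, hf, hg]
  | hsmul a f hf => rw [map_smul, map_smul, hf]

/-- linear map with prescribed values on monomials -/
def mkLin {W : Type} [AddCommGroup W] [Module ℂ W] (u : ℤ → W) : V →ₗ[ℂ] W :=
  (AddMonoidAlgebra.basis ℤ ℂ).constr ℂ u

theorem mkLin_Xm {W : Type} [AddCommGroup W] [Module ℂ W] (u : ℤ → W) (m : ℤ) :
    mkLin u (Xm m) = u m := by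
  have h : AddMonoidAlgebra.basis ℤ ℂ m = Xm m := AddMonoidAlgebra.basis_apply ℂ m
  rw [mkLin, ← h, Module.Basis.constr_basis]

/-- evaluation at x -/
def evl (x : ℂ) : V →ₗ[ℂ] ℂ := mkLin (fun m => x ^ m)
/-- the logarithmic derivative X d/dX -/
def Dl : V →ₗ[ℂ] V := mkLin (fun m => (m : ℂ) • Xm m)

theorem evl_Xm (x : ℂ) (m : ℤ) : evl x (Xm m) = x ^ m := mkLin_Xm _ _
theorem Dl_Xm (m : ℤ) : Dl (Xm m) = (m : ℂ) • Xm m := mkLin_Xm _ _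

theorem evl_one (x : ℂ) : evl x 1 = 1 := by rw [← Xm_zero, evl_Xm, zpow_zero]
theorem Dl_one : Dl 1 = 0 := by rw [← Xm_zero, Dl_Xm]; simp

theorem evl_mul (x : ℂ) (hx : x ≠ 0) (f g : V) : evl x (f * g) = evl x f * evl x g := by
  induction f using V_induct with
  | hX m =>
    induction g using V_induct with
    | hX n => rw [← Xm_add, evl_Xm, evl_Xm, evl_Xm, zpow_add₀ hx]
    | hadd f g hf hg => rw [mul_add, map_add, map_add, hf, hg, mul_add]
    | hsmul a f hf => rw [mul_smul_comm, map_smul, map_smul, hf, mul_smul_comm]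
  | hadd f g hf hg => rw [add_mul, map_add, map_add, hf, hg, add_mul]
  | hsmul a f hf => rw [smul_mul_assoc, map_smul, map_smul, hf, smul_mul_assoc]

theorem Dl_mul (f g : V) : Dl (f * g) = Dl f * g + f * Dl g := by
  induction f using V_induct with
  | hX m =>
    induction g using V_induct with
    | hX n =>
      rw [← Xm_add, Dl_Xm, Dl_Xm, Dl_Xm, smul_mul_assoc, mul_smul_comm, ← Xm_add, ← add_smul]
      push_cast; rfl
    | hadd f g hf hg => rw [mul_add, map_add, map_add, hf, hg, mul_add, mul_add]; abel
    | hsmul a f hf =>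
      rw [mul_smul_comm, map_smul, map_smul, hf, mul_smul_comm, mul_smul_comm, smul_add]
  | hadd f g hf hg => rw [add_mul, map_add, map_add, hf, hg, add_mul, add_mul]; abel
  | hsmul a f hf =>
    rw [smul_mul_assoc, map_smul, map_smul, hf, smul_mul_assoc, smul_mul_assoc, smul_add]

structure Ctx (q2 t2 : ℂ) (S Top Pi : V →ₗ[ℂ] V) : Prop where
  hq2 : q2 ≠ 0
  ht2 : t2 ≠ 0
  hS : ∀ m : ℤ, S (Xm m) = Xm (-m)
  hPi : ∀ m : ℤ, Pi (Xm m) = q2 ^ m • Xm (-m)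
  hT : ∀ f : V, (Xm 2 - 1) * Top f = t2 • ((Xm 2 - 1) * S f) + (t2 - t2⁻¹) • (S f - f)

namespace Ctx

variable {q2 t2 : ℂ} {S Top Pi : V →ₗ[ℂ] V}

theorem S_mul (h : Ctx q2 t2 S Top Pi) (f g : V) : S (f * g) = S f * S g := by
  induction f using V_induct with
  | hX m =>
    induction g using V_induct with
    | hX n => rw [← Xm_add, h.hS, h.hS, h.hS, ← Xm_add, neg_add]
    | hadd f g hf hg => rw [mul_add, map_add, map_add, hf, hg, mul_add]
    | hsmul a f hf => rw [mul_smul_comm, map_smul, map_smul, hf, mul_smul_comm]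
  | hadd f g hf hg => rw [add_mul, map_add, map_add, hf, hg, add_mul]
  | hsmul a f hf => rw [smul_mul_assoc, map_smul, map_smul, hf, smul_mul_assoc]

theorem S_one (h : Ctx q2 t2 S Top Pi) : S 1 = 1 := by
  rw [← Xm_zero, h.hS, neg_zero]

theorem S_S (h : Ctx q2 t2 S Top Pi) (f : V) : S (S f) = f := by
  have := V_ext (A := S ∘ₗ S) (B := LinearMap.id) (by intro m; simp [h.hS]) f
  simpa using this

theorem evl_S (h : Ctx q2 t2 S Top Pi) (x : ℂ) (f : V) : evl x (S f) = evl x⁻¹ f := by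
  have := V_ext (A := evl x ∘ₗ S) (B := evl x⁻¹) (by intro m; simp [h.hS, evl_Xm]) f
  simpa using this

theorem Dl_S (h : Ctx q2 t2 S Top Pi) (f : V) : Dl (S f) = - S (Dl f) := by
  have := V_ext (A := Dl ∘ₗ S) (B := - (S ∘ₗ Dl)) (by intro m; simp [h.hS, Dl_Xm]) f
  simpa using this

theorem evl_Pi (h : Ctx q2 t2 S Top Pi) (x : ℂ) (f : V) : evl x (Pi f) = evl (q2 * x⁻¹) f := by
  have := V_ext (A := evl x ∘ₗ Pi) (B := evl (q2 * x⁻¹))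
    (by intro m; simp [h.hPi, evl_Xm, mul_zpow]) f
  simpa using this

theorem Dl_Pi (h : Ctx q2 t2 S Top Pi) (f : V) : Dl (Pi f) = - Pi (Dl f) := by
  have := V_ext (A := Dl ∘ₗ Pi) (B := - (Pi ∘ₗ Dl))
    (by intro m; simp [h.hPi, Dl_Xm, smul_smul, mul_comm]) f
  simpa using this

theorem Pi_Pi (h : Ctx q2 t2 S Top Pi) (f : V) : Pi (Pi f) = f := by
  have := V_ext (A := Pi ∘ₗ Pi) (B := LinearMap.id)
    (by intro m; simp [h.hPi, smul_smul, mul_inv_cancel₀ (zpow_ne_zero m h.hq2)]) f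
  simpa using this

theorem Pi_X (h : Ctx q2 t2 S Top Pi) (f : V) : Pi (Xm 1 * f) = q2 • (Xm (-1) * Pi f) := by
  induction f using V_induct with
  | hX m =>
    rw [← Xm_add, h.hPi, h.hPi, mul_smul_comm, smul_smul, ← Xm_add, neg_add, zpow_add₀ h.hq2,
      zpow_one]
  | hadd f g hf hg => rw [mul_add, map_add, map_add, hf, hg, mul_add, smul_add]
  | hsmul a f hf => rw [mul_smul_comm, map_smul, map_smul, hf, mul_smul_comm, smul_comm]

theorem X2_ne : (Xm 2 - 1 : V) ≠ 0 := by
  intro h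
  have := congrArg (evl 2) h
  rw [map_sub, evl_Xm, evl_one, map_zero] at this
  norm_num at this

theorem T_one (h : Ctx q2 t2 S Top Pi) : Top 1 = t2 • 1 := by
  apply mul_left_cancel₀ X2_ne
  rw [h.hT, h.S_one]
  simp

theorem Xm_sq : Xm 2 = Xm 1 * Xm 1 := by rw [← Xm_add]; rfl
theorem Xm_inv : Xm 1 * Xm (-1) = 1 := by rw [← Xm_add, ← Xm_zero]; rfl
theorem Xm_inv2 : Xm 2 * Xm (-2) = 1 := by rw [← Xm_add, ← Xm_zero]; rfl

theorem T_X (h : Ctx q2 t2 S Top Pi) (f : V) :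
    Top (Xm 1 * f) = Xm (-1) * (Top f - (t2 - t2⁻¹) • f) := by
  apply mul_left_cancel₀ X2_ne
  have h1 := h.hT f
  rw [h.hT, h.S_mul, h.hS]
  simp only [Algebra.smul_def] at h1 ⊢
  rw [Xm_sq] at h1 ⊢
  linear_combination (-Xm (-1)) * h1 + (algebraMap ℂ V (t2 - t2⁻¹)) * Xm 1 * f * Xm_inv

theorem T_T (h : Ctx q2 t2 S Top Pi) (f : V) :
    Top (Top f) = (t2 - t2⁻¹) • Top f + f := by
  apply mul_left_cancel₀ (mul_ne_zero X2_ne X2_ne)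
  have h1 := h.hT f
  have h2 := h.hT (Top f)
  have h3 := congrArg S h1
  rw [h.S_mul] at h3
  simp only [map_add, map_sub, map_smul, h.S_one, h.hS, h.S_S, h.S_mul] at h3
  simp only [Algebra.smul_def, map_sub] at h1 h2 h3 ⊢
  have h4 : algebraMap ℂ V t2 * algebraMap ℂ V t2⁻¹ = 1 := by
    rw [← map_mul, mul_inv_cancel₀ h.ht2, map_one]
  have h5 := Xm_inv2
  generalize Xm (-2) = v at *
  generalize Xm 2 = u at *
  generalize algebraMap ℂ V t2 = a at *
  generalize algebraMap ℂ V t2⁻¹ = b at *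
  generalize S (Top f) = sg at *
  generalize Top f = g at *
  generalize Top g = tg at *
  generalize S f = sf at *
  linear_combination (u - 1) * h2 - u * (a * u - b) * h3 - (a - b) * u * h1
    + (u - 1) ^ 2 * f * h4 + ((a * u - b) * sg - (a * u - b) * a * f) * h5

end Ctx

namespace Ctx

variable {q2 t2 : ℂ} {S Top Pi : V →ₗ[ℂ] V}

theorem evl_X2 (x : ℂ) : evl x (Xm 2) = x ^ 2 := by
  rw [evl_Xm]; rfl

theorem Dl_X2 : Dl (Xm 2) = (2 : ℂ) • Xm 2 := by rw [Dl_Xm]; norm_num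

theorem evl_T (h : Ctx q2 t2 S Top Pi) {x : ℂ} (hx : x ≠ 0) (f : V) :
    (x ^ 2 - 1) * evl x (Top f)
      = (t2 * x ^ 2 - t2⁻¹) * evl x⁻¹ f - (t2 - t2⁻¹) * evl x f := by
  have := congrArg (evl x) (h.hT f)
  simp only [map_add, map_sub, map_smul, evl_mul x hx, evl_X2, evl_one, h.evl_S, smul_eq_mul] at this
  linear_combination this

theorem evl_DT (h : Ctx q2 t2 S Top Pi) {x : ℂ} (hx : x ≠ 0) (f : V) :
    2 * x ^ 2 * evl x (Top f) + (x ^ 2 - 1) * evl x (Dl (Top f))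
      = 2 * t2 * x ^ 2 * evl x⁻¹ f - (t2 * x ^ 2 - t2⁻¹) * evl x⁻¹ (Dl f)
        - (t2 - t2⁻¹) * evl x (Dl f) := by
  have := congrArg (fun g => evl x (Dl g)) (h.hT f)
  simp only [map_add, map_sub, map_smul, map_neg, Dl_mul, Dl_X2, Dl_one, h.Dl_S, evl_mul x hx,
    evl_X2, evl_one, h.evl_S, smul_eq_mul, map_zero] at this
  linear_combination this

theorem evl_DDT (h : Ctx q2 t2 S Top Pi) {x : ℂ} (hx : x ≠ 0) (f : V) :
    4 * x ^ 2 * evl x (Top f) + 4 * x ^ 2 * evl x (Dl (Top f))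
        + (x ^ 2 - 1) * evl x (Dl (Dl (Top f)))
      = t2 * (4 * x ^ 2 * evl x⁻¹ f - 4 * x ^ 2 * evl x⁻¹ (Dl f)
          + (x ^ 2 - 1) * evl x⁻¹ (Dl (Dl f)))
        + (t2 - t2⁻¹) * (evl x⁻¹ (Dl (Dl f)) - evl x (Dl (Dl f))) := by
  have := congrArg (fun g => evl x (Dl (Dl g))) (h.hT f)
  simp only [map_add, map_sub, map_smul, map_neg, Dl_mul, Dl_X2, Dl_one, h.Dl_S, evl_mul x hx,
    evl_X2, evl_one, h.evl_S, smul_eq_mul, map_zero, neg_neg] at this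
  linear_combination this

end Ctx

/-- combinatorial propagation -/
theorem propagate (N κ : ℤ) (hκ : 0 < κ) (hN : 2 * κ ≤ N) (Z W : ℤ → Prop)
    (hpi : ∀ j, Z j → Z (1 - j)) (hpiW : ∀ j, W j → W (1 - j))
    (hs : ∀ j, ¬ N ∣ j - κ → Z j → Z (-j))
    (hsW : ∀ j, ¬ N ∣ j - κ → Z j → Z (-j) → W j → W (-j))
    (hd : ∀ j, N ∣ j → Z j → W j)
    (he : ∀ j, N ∣ j - κ → Z j → W j → Z (-j))
    (hper : ∀ j, Z j → Z (j - 2 * N))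
    (j₀ : ℤ) (h0 : Z j₀) :
    (∀ j, Z j) ∧ ∀ a j, N ∣ a → a - κ < j → j ≤ a + κ → W j := by
  have hNpos : 0 < N := by omega
  -- a number strictly between consecutive multiples is not a multiple
  have nd : ∀ x y : ℤ, N ∣ x → x < y → y < x + N → ¬ N ∣ y := by
    intro x y hx h1 h2 hy
    obtain ⟨c, hc⟩ := hx
    obtain ⟨d, hd⟩ := hy
    subst hc hd
    have h3 : c < d := by
      by_contra hcon
      have : N * d ≤ N * c := by gcongr; omega
      omega
    have : N * (c + 1) ≤ N * d := by gcongr; omega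
    rw [mul_add] at this
    omega
  have up : ∀ j, ¬ N ∣ j - κ → Z j → Z (j + 1) := by
    intro j hj hz
    have := hpi _ (hs j hj hz)
    rwa [show 1 - -j = j + 1 by ring] at this
  have down : ∀ j, ¬ N ∣ (1 - j) - κ → Z j → Z (j - 1) := by
    intro j hj hz
    have := hs _ hj (hpi j hz)
    rwa [show -(1 - j) = j - 1 by ring] at this
  have upW : ∀ j, ¬ N ∣ j - κ → Z j ∧ W j → Z (j + 1) ∧ W (j + 1) := by
    intro j hj hz
    refine ⟨up j hj hz.1, ?_⟩
    have := hpiW _ (hsW j hj hz.1 (hs j hj hz.1) hz.2)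
    rwa [show 1 - -j = j + 1 by ring] at this
  have downW : ∀ j, ¬ N ∣ (1 - j) - κ → Z j ∧ W j → Z (j - 1) ∧ W (j - 1) := by
    intro j hj hz
    refine ⟨down j hj hz.1, ?_⟩
    have := hsW _ hj (hpi j hz.1) (hs _ hj (hpi j hz.1)) (hpiW j hz.2)
    rwa [show -(1 - j) = j - 1 by ring] at this
  -- conditions
  have cu : ∀ a j, N ∣ a → a + κ - N < j → j < a + κ → ¬ N ∣ j - κ := by
    intro a j ha h1 h2
    exact nd (a - N) _ (dvd_sub_self_right.mpr ha) (by omega) (by omega)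
  have cd : ∀ a j, N ∣ a → a + 1 - κ < j → j < a + 1 - κ + N → ¬ N ∣ (1 - j) - κ := by
    intro a j ha h1 h2 h3
    refine nd a (j + κ - 1) ha (by omega) (by omega) ?_
    rw [show j + κ - 1 = - ((1 - j) - κ) by ring]
    exact (dvd_neg).mpr h3
  -- iterated moves
  have upn : ∀ a, N ∣ a → ∀ n : ℕ, ∀ j, a + κ - N < j → j + n ≤ a + κ → Z j → Z (j + n) := by
    intro a ha n
    induction n with
    | zero => intro j _ _ h; simpa using h
    | succ n ih =>
      intro j h1 h2 h
      push_cast at h2 ⊢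
      have := up _ (cu a (j + n) ha (by omega) (by omega)) (ih j h1 (by omega) h)
      rwa [add_assoc] at this
  have dnn : ∀ a, N ∣ a → ∀ n : ℕ, ∀ j, j < a + 1 - κ + N → a + 1 - κ ≤ j - n → Z j → Z (j - n) := by
    intro a ha n
    induction n with
    | zero => intro j _ _ h; simpa using h
    | succ n ih =>
      intro j h1 h2 h
      push_cast at h2 ⊢
      have := down _ (cd a (j - n) ha (by omega) (by omega)) (ih j h1 (by omega) h)
      rwa [sub_sub] at this
  have upnW : ∀ a, N ∣ a → ∀ n : ℕ, ∀ j, a + κ - N < j → j + n ≤ a + κ → Z j ∧ W j →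
      Z (j + n) ∧ W (j + n) := by
    intro a ha n
    induction n with
    | zero => intro j _ _ h; simpa using h
    | succ n ih =>
      intro j h1 h2 h
      push_cast at h2 ⊢
      have := upW _ (cu a (j + n) ha (by omega) (by omega)) (ih j h1 (by omega) h)
      rwa [add_assoc] at this
  have dnnW : ∀ a, N ∣ a → ∀ n : ℕ, ∀ j, j < a + 1 - κ + N → a + 1 - κ ≤ j - n → Z j ∧ W j →
      Z (j - n) ∧ W (j - n) := by
    intro a ha n
    induction n with
    | zero => intro j _ _ h; simpa using h
    | succ n ih =>
      intro j h1 h2 h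
      push_cast at h2 ⊢
      have := downW _ (cd a (j - n) ha (by omega) (by omega)) (ih j h1 (by omega) h)
      rwa [sub_sub] at this
  -- segment around a
  have segW : ∀ a, N ∣ a → Z a → ∀ j, a - κ < j → j ≤ a + κ → Z j ∧ W j := by
    intro a ha hz j h1 h2
    have hw := hd a ha hz
    rcases le_total a j with h | h
    · have := upnW a ha (j - a).toNat a (by omega) (by omega) ⟨hz, hw⟩
      rwa [show a + ((j - a).toNat : ℤ) = j by omega] at this
    · have := dnnW a ha (a - j).toNat a (by omega) (by omega) ⟨hz, hw⟩
      rwa [show a - ((a - j).toNat : ℤ) = j by omega] at this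
  have next : ∀ a, N ∣ a → Z a → ∀ j, a ≤ j → j ≤ a + N → Z j := by
    intro a ha hz j h1 h2
    rcases le_or_gt j (a + κ) with h | h
    · exact (segW a ha hz j (by omega) h).1
    · have hk := segW a ha hz (a + κ) (by omega) (by omega)
      have h3 := hpi _ (he (a + κ) (by simpa using ha) hk.1 hk.2)
      rw [show 1 - -(a + κ) = a + κ + 1 by ring] at h3
      have := upn (a + N) (dvd_add ha (dvd_refl N)) (j - (a + κ + 1)).toNat (a + κ + 1)
        (by omega) (by omega) h3
      rwa [show a + κ + 1 + ((j - (a + κ + 1)).toNat : ℤ) = j by omega] at this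
  have start : ∃ a, N ∣ a ∧ Z a := by
    -- j₀ = a + r, r ∈ (κ - N, κ]
    have hm := Int.emod_add_mul_ediv (j₀ + N - κ - 1) N
    have hm1 := Int.emod_nonneg (j₀ + N - κ - 1) (by omega : N ≠ 0)
    have hm2 := Int.emod_lt_of_pos (j₀ + N - κ - 1) hNpos
    set a := N * ((j₀ + N - κ - 1) / N) with ha
    have hdv : N ∣ a := ⟨_, rfl⟩
    refine ⟨a, hdv, ?_⟩
    rcases le_total j₀ a with h | h
    · have := upn a hdv (a - j₀).toNat j₀ (by omega) (by omega) h0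
      rwa [show j₀ + ((a - j₀).toNat : ℤ) = a by omega] at this
    · have := dnn a hdv (j₀ - a).toNat j₀ (by omega) (by omega) h0
      rwa [show j₀ - ((j₀ - a).toNat : ℤ) = a by omega] at this
  obtain ⟨a, ha, hza⟩ := start
  have fwd : ∀ n : ℕ, Z (a + n * N) := by
    intro n
    induction n with
    | zero => simpa using hza
    | succ n ih =>
      have := next _ (dvd_add ha (Dvd.intro_left _ rfl)) ih (a + n * N + N) (by omega) (by omega)
      rw [show a + ((n + 1 : ℕ) : ℤ) * N = a + n * N + N by push_cast; ring]
      exact this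
  have back : ∀ n : ℕ, ∀ j, Z j → Z (j - n * (2 * N)) := by
    intro n
    induction n with
    | zero => intro j h; simpa using h
    | succ n ih =>
      intro j h
      have := hper _ (ih j h)
      rw [show j - ((n + 1 : ℕ) : ℤ) * (2 * N) = j - n * (2 * N) - 2 * N by push_cast; ring]
      exact this
  have allm : ∀ b, N ∣ b → Z b := by
    intro b hb
    obtain ⟨c, rfl⟩ := ha
    obtain ⟨d, rfl⟩ := hb
    have h1 := back (c.natAbs + d.natAbs) _ (fwd (d - c + 2 * (c.natAbs + d.natAbs : ℕ)).toNat)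
    rw [Int.toNat_of_nonneg (by omega)] at h1
    convert h1 using 1
    ring
  refine ⟨fun j => ?_, fun b j hb h1 h2 => (segW b hb (allm b hb) j h1 h2).2⟩
  have hm := Int.emod_add_mul_ediv j N
  have hm1 := Int.emod_nonneg j (by omega : N ≠ 0)
  have hm2 := Int.emod_lt_of_pos j hNpos
  exact next _ (Dvd.intro _ rfl) (allm (N * (j / N)) (Dvd.intro _ rfl)) j (by omega) (by omega)

structure Ctx2 (q2 t2 : ℂ) (S Top Pi : V →ₗ[ℂ] V) (N : ℕ) (κ : ℤ) : Prop
    extends Ctx q2 t2 S Top Pi where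
  hprim : IsPrimitiveRoot q2 (2 * N)
  hκ : 0 < κ
  hN : 2 * κ ≤ N
  htk : t2 = q2 ^ (-κ)

def InE (N κ j : ℤ) : Prop := ∃ a, N ∣ a ∧ a - κ < j ∧ j ≤ a + κ

def Isub (q2 : ℂ) (N κ : ℤ) : Submodule ℂ V where
  carrier := {f | (∀ j : ℤ, evl (q2 ^ j) f = 0) ∧ ∀ j : ℤ, InE N κ j → evl (q2 ^ j) (Dl f) = 0}
  add_mem' := by
    rintro a b ⟨h1, h2⟩ ⟨h3, h4⟩
    refine ⟨fun j => by rw [map_add, h1, h3, add_zero], fun j hj => ?_⟩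
    rw [map_add, map_add, h2 j hj, h4 j hj, add_zero]
  zero_mem' := by simp
  smul_mem' := by
    rintro c a ⟨h1, h2⟩
    refine ⟨fun j => by rw [map_smul, h1, smul_zero], fun j hj => ?_⟩
    rw [map_smul, map_smul, h2 j hj, smul_zero]

theorem mem_Isub {q2 : ℂ} {N κ : ℤ} {f : V} : f ∈ Isub q2 N κ ↔
    (∀ j : ℤ, evl (q2 ^ j) f = 0) ∧ ∀ j : ℤ, InE N κ j → evl (q2 ^ j) (Dl f) = 0 := Iff.rfl

theorem InE_mul {N κ j : ℤ} (hκ : 0 < κ) (h : N ∣ j) : InE N κ j := ⟨j, h, by omega, by omega⟩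

theorem InE_neg {N κ j : ℤ} (h : InE N κ j) (h' : ¬ N ∣ j - κ) : InE N κ (-j) := by
  obtain ⟨a, ha, h1, h2⟩ := h
  have : j ≠ a + κ := by
    rintro rfl
    exact h' (by simpa using ha)
  exact ⟨-a, (dvd_neg).mpr ha, by omega, by omega⟩

theorem InE_one_sub {N κ j : ℤ} (h : InE N κ j) : InE N κ (1 - j) := by
  obtain ⟨a, ha, h1, h2⟩ := h
  exact ⟨-a, (dvd_neg).mpr ha, by omega, by omega⟩

namespace Ctx2

variable {q2 t2 : ℂ} {S Top Pi : V →ₗ[ℂ] V} {N : ℕ} {κ : ℤ}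

theorem pt_ne (h : Ctx2 q2 t2 S Top Pi N κ) (j : ℤ) : q2 ^ j ≠ 0 := zpow_ne_zero _ h.hq2

theorem sq_iff (h : Ctx2 q2 t2 S Top Pi N κ) (j : ℤ) : (q2 ^ j) ^ 2 = 1 ↔ (N : ℤ) ∣ j := by
  have : (q2 ^ j) ^ 2 = q2 ^ (2 * j) := by
    rw [← zpow_natCast, ← zpow_mul]; congr 1; push_cast; ring
  rw [this, h.hprim.zpow_eq_one_iff_dvd]
  push_cast
  exact mul_dvd_mul_iff_left (by norm_num)

theorem coef_iff (h : Ctx2 q2 t2 S Top Pi N κ) (j : ℤ) :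
    t2 * (q2 ^ j) ^ 2 - t2⁻¹ = 0 ↔ (N : ℤ) ∣ j - κ := by
  rw [← h.sq_iff, h.htk, zpow_sub₀ h.hq2, zpow_neg]
  have := h.pt_ne κ
  rw [inv_inv, sub_eq_zero]
  constructor
  · intro e
    field_simp at e ⊢
    exact e
  · intro e
    field_simp at e ⊢
    exact e

theorem c_ne (h : Ctx2 q2 t2 S Top Pi N κ) : t2 - t2⁻¹ ≠ 0 := by
  have h1 := h.coef_iff 0
  simp only [zpow_zero, one_pow, mul_one] at h1
  rw [Ne, h1]
  intro hd
  have := Int.le_of_dvd h.hκ (by simpa using hd)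
  have := h.hN
  have := h.hκ
  omega

theorem inv_pt (j : ℤ) : (q2 ^ j)⁻¹ = q2 ^ (-j) := (zpow_neg _ _).symm

theorem evl_Pi' (h : Ctx2 q2 t2 S Top Pi N κ) (j : ℤ) (f : V) :
    evl (q2 ^ j) (Pi f) = evl (q2 ^ (1 - j)) f := by
  rw [h.evl_Pi, sub_eq_add_neg, zpow_add₀ h.hq2, zpow_one, zpow_neg]

theorem I_T (h : Ctx2 q2 t2 S Top Pi N κ) {f : V} (hf : f ∈ Isub q2 N κ) :
    Top f ∈ Isub q2 N κ := by
  rw [mem_Isub] at hf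
  obtain ⟨h1, h2⟩ := hf
  have h0 : ∀ j : ℤ, evl (q2 ^ j) (Top f) = 0 := by
    intro j
    by_cases hj : (N : ℤ) ∣ j
    · have e := h.evl_DT (h.pt_ne j) f
      rw [inv_pt, h1, h2 j (InE_mul h.hκ hj), h2 (-j) (InE_mul h.hκ ((dvd_neg).mpr hj)),
        (h.sq_iff j).mpr hj] at e
      linear_combination e / 2
    · have e := h.evl_T (h.pt_ne j) f
      rw [inv_pt, h1, h1] at e
      have : (q2 ^ j) ^ 2 - 1 ≠ 0 := by
        rw [sub_ne_zero, Ne, h.sq_iff]; exact hj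
      exact (mul_eq_zero.mp (e.trans (by ring))).resolve_left this
  refine ⟨h0, fun j hjE => ?_⟩
  by_cases hj : (N : ℤ) ∣ j
  · have e := h.evl_DDT (h.pt_ne j) f
    have hx := (h.sq_iff j).mpr hj
    have hinv : (q2 ^ j)⁻¹ = q2 ^ j := by
      exact inv_eq_of_mul_eq_one_left (by rw [← sq]; exact hx)
    rw [hinv, hx, h0, h1, h2 j hjE] at e
    linear_combination e / 4
  · have e := h.evl_DT (h.pt_ne j) f
    have hne : (q2 ^ j) ^ 2 - 1 ≠ 0 := by
      rw [sub_ne_zero, Ne, h.sq_iff]; exact hj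
    have hz : (t2 * (q2 ^ j) ^ 2 - t2⁻¹) * evl (q2 ^ j)⁻¹ (Dl f) = 0 := by
      by_cases hk : (N : ℤ) ∣ j - κ
      · rw [(h.coef_iff j).mpr hk, zero_mul]
      · rw [inv_pt, h2 _ (InE_neg hjE hk), mul_zero]
    rw [hz, h2 j hjE, inv_pt, h1, h0] at e
    exact (mul_eq_zero.mp (by linear_combination e)).resolve_left hne

theorem I_Pi (h : Ctx2 q2 t2 S Top Pi N κ) {f : V} (hf : f ∈ Isub q2 N κ) :
    Pi f ∈ Isub q2 N κ := by
  rw [mem_Isub] at hf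
  refine ⟨fun j => by rw [h.evl_Pi', hf.1], fun j hj => ?_⟩
  rw [h.Dl_Pi, map_neg, h.evl_Pi', hf.2 _ (InE_one_sub hj), neg_zero]

theorem prop_M (h : Ctx2 q2 t2 S Top Pi N κ) (M : Submodule ℂ V)
    (hMT : ∀ f ∈ M, Top f ∈ M) (hMP : ∀ f ∈ M, Pi f ∈ M) (j₀ : ℤ)
    (h0 : ∀ f ∈ M, evl (q2 ^ j₀) f = 0) : M ≤ Isub q2 N κ := by
  have hp := propagate N κ h.hκ h.hN (fun j => ∀ f ∈ M, evl (q2 ^ j) f = 0)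
    (fun j => ∀ f ∈ M, evl (q2 ^ j) (Dl f) = 0)
    (by
      intro j hz f hf
      rw [← h.evl_Pi']
      exact hz _ (hMP f hf))
    (by
      intro j hz f hf
      have := hz _ (hMP f hf)
      rw [h.Dl_Pi, map_neg, h.evl_Pi', neg_eq_zero] at this
      exact this)
    (by
      intro j hj hz f hf
      have e := h.evl_T (h.pt_ne j) f
      rw [hz f hf, hz _ (hMT f hf), inv_pt] at e
      rw [← h.coef_iff] at hj
      exact (mul_eq_zero.mp (by linear_combination -e)).resolve_left hj)
    (by
      intro j hj hz hz' hw f hf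
      have e := h.evl_DT (h.pt_ne j) f
      rw [hz _ (hMT f hf), hw _ (hMT f hf), hw f hf, inv_pt, hz' f hf] at e
      rw [← h.coef_iff] at hj
      exact (mul_eq_zero.mp (by linear_combination e)).resolve_left hj)
    (by
      intro j hj hz f hf
      have e := h.evl_DT (h.pt_ne j) f
      have hx := (h.sq_iff j).mpr hj
      have hinv : (q2 ^ j)⁻¹ = q2 ^ j := by
        exact inv_eq_of_mul_eq_one_left (by rw [← sq]; exact hx)
      rw [hinv, hx, hz f hf, hz _ (hMT f hf)] at e
      exact (mul_eq_zero.mp (by linear_combination e / 2)).resolve_left h.c_ne)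
    (by
      intro j hj hz hw f hf
      have e := h.evl_DT (h.pt_ne j) f
      rw [hz _ (hMT f hf), hw _ (hMT f hf), hw f hf, (h.coef_iff j).mpr hj, inv_pt] at e
      have hne : t2 * (q2 ^ j) ^ 2 ≠ 0 := mul_ne_zero h.ht2 (pow_ne_zero _ (h.pt_ne j))
      exact (mul_eq_zero.mp (by linear_combination - e / 2)).resolve_left hne)
    (by
      intro j hz f hf
      have : q2 ^ (j - 2 * (N : ℤ)) = q2 ^ j := by
        rw [zpow_sub₀ h.hq2]
        have := h.hprim.pow_eq_one
        have h2 : q2 ^ (2 * (N : ℤ)) = 1 := by exact_mod_cast this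
        rw [h2, div_one]
      rw [this]
      exact hz f hf)
    j₀ h0
  intro f hf
  refine ⟨fun j => hp.1 j f hf, fun j hj => ?_⟩
  obtain ⟨a, ha, h1, h2⟩ := hj
  exact hp.2 a j ha h1 h2 f hf

end Ctx2

theorem evl_toLaurent (x : ℂ) (p : Polynomial ℂ) :
    evl x (Polynomial.toLaurent p) = p.eval x := by
  induction p using Polynomial.induction_on' with
  | add p q hp hq => rw [map_add, map_add, hp, hq, Polynomial.eval_add]
  | monomial n a =>
    rw [Polynomial.toLaurent_C_mul_T, ← LaurentPolynomial.smul_eq_C_mul, map_smul,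
      show (LaurentPolynomial.T (n : ℤ) : V) = Xm n from rfl, evl_Xm, Polynomial.eval_monomial]
    simp

namespace Ctx2

variable {q2 t2 : ℂ} {S Top Pi : V →ₗ[ℂ] V} {N : ℕ} {κ : ℤ}

theorem q2N (h : Ctx2 q2 t2 S Top Pi N κ) : q2 ^ (2 * (N : ℤ)) = 1 := by
  have := h.hprim.pow_eq_one
  exact_mod_cast this

theorem Npos (h : Ctx2 q2 t2 S Top Pi N κ) : 0 < N := by
  have := h.hN
  have := h.hκ
  omega

theorem pt_congr (h : Ctx2 q2 t2 S Top Pi N κ) {i j : ℤ} :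
    q2 ^ i = q2 ^ j ↔ 2 * (N : ℤ) ∣ i - j := by
  have := h.hprim.zpow_eq_one_iff_dvd (i - j)
  push_cast at this
  rw [← this, zpow_sub₀ h.hq2, div_eq_one_iff_eq (h.pt_ne j)]

theorem evl_big (h : Ctx2 q2 t2 S Top Pi N κ) (j : ℤ) :
    evl (q2 ^ j) (Xm (2 * N) - 1) = 0 := by
  rw [map_sub, evl_Xm, evl_one, ← zpow_mul, mul_comm, zpow_mul, h.q2N, one_zpow, sub_self]

theorem evl_Dbig (h : Ctx2 q2 t2 S Top Pi N κ) (j : ℤ) (f : V) :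
    evl (q2 ^ j) (Dl ((Xm (2 * N) - 1) * f)) = 2 * N * evl (q2 ^ j) f := by
  rw [Dl_mul, map_add, evl_mul _ (h.pt_ne j), evl_mul _ (h.pt_ne j), h.evl_big, map_sub, Dl_one,
    Dl_Xm, sub_zero, map_smul, evl_Xm, ← zpow_mul, mul_comm j, zpow_mul, h.q2N, one_zpow]
  simp

theorem big_mem (h : Ctx2 q2 t2 S Top Pi N κ) :
    (Xm (2 * N) - 1) * (Xm (2 * N) - 1) ∈ Isub q2 N κ := by
  refine ⟨fun j => by rw [evl_mul _ (h.pt_ne j), h.evl_big, zero_mul], fun j _ => ?_⟩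
  rw [h.evl_Dbig, h.evl_big, mul_zero]

theorem root_M (h : Ctx2 q2 t2 S Top Pi N κ) (M : Submodule ℂ V)
    (hMP : ∀ f ∈ M, Pi f ∈ M) (hMX : ∀ f ∈ M, Xm 1 * f ∈ M)
    (hI : Isub q2 N κ ≤ M) (hM : M ≠ ⊤) : ∃ j : ℤ, ∀ f ∈ M, evl (q2 ^ j) f = 0 := by
  have hMXi : ∀ f ∈ M, Xm (-1) * f ∈ M := by
    intro f hf
    have h1 := hMP _ (hMX _ (hMP f hf))
    rw [h.Pi_X, h.Pi_Pi] at h1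
    have := M.smul_mem q2⁻¹ h1
    rwa [smul_smul, inv_mul_cancel₀ h.hq2, one_smul] at this
  have hMm : ∀ (m : ℤ) (f : V), f ∈ M → Xm m * f ∈ M := by
    intro m
    induction m using Int.induction_on with
    | zero => intro f hf; rwa [Xm_zero, one_mul]
    | succ n ih =>
      intro f hf
      rw [Xm_add, mul_assoc]
      exact ih _ (hMX f hf)
    | pred n ih =>
      intro f hf
      rw [sub_eq_add_neg, Xm_add, mul_assoc]
      exact ih _ (hMXi f hf)
  let A : Ideal V :=
    { carrier := M
      add_mem' := M.add_mem
      zero_mem' := M.zero_mem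
      smul_mem' := by
        intro c x hx
        change c * x ∈ M
        induction c using V_induct with
        | hX m => exact hMm m x hx
        | hadd f g hf hg => rw [add_mul]; exact M.add_mem hf hg
        | hsmul a f hf => rw [smul_mul_assoc]; exact M.smul_mem _ hf }
  have hA : A ≠ ⊤ := by
    intro hA
    apply hM
    rw [eq_top_iff]
    intro f _
    have : f ∈ A := by rw [hA]; trivial
    exact this
  obtain ⟨P, hP, hAP⟩ := Ideal.exists_le_maximal A hA
  have hprime := hP.isPrime
  have hb : (Xm (2 * N) - 1 : V) ∈ P := by
    have h1 : (Xm (2 * N) - 1) * (Xm (2 * N) - 1) ∈ P := hAP (hI h.big_mem)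
    rcases hprime.mem_or_mem h1 with h2 | h2 <;> exact h2
  have hpoly : (Xm (2 * N) - 1 : V) = Polynomial.toLaurent (Polynomial.X ^ (2 * N) - 1) := by
    rw [map_sub, Polynomial.toLaurent_X_pow, Polynomial.toLaurent_one]
    push_cast
    rfl
  have hpos : 0 < 2 * N := by have := h.Npos; omega
  rw [hpoly, Polynomial.X_pow_sub_one_eq_prod hpos h.hprim, map_prod, hprime.prod_mem_iff] at hb
  obtain ⟨z, hz, hzP⟩ := hb
  rw [Polynomial.mem_nthRootsFinset hpos] at hz
  have : NeZero (2 * N) := ⟨by omega⟩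
  obtain ⟨i, _, hi⟩ := h.hprim.eq_pow_of_pow_eq_one hz
  refine ⟨i, ?_⟩
  rw [zpow_natCast, hi]
  have hz0 : z ≠ 0 := by
    rw [← hi]; exact pow_ne_zero _ h.hq2
  rw [map_sub, Polynomial.toLaurent_X, Polynomial.toLaurent_C] at hzP
  have hzP' : (Xm 1 - algebraMap ℂ V z : V) ∈ P := hzP
  have key : ∀ f : V, f - algebraMap ℂ V (evl z f) ∈ P := by
    intro f
    induction f using V_induct with
    | hX m =>
      rw [evl_Xm]
      induction m using Int.induction_on with
      | zero => simp [Xm_zero]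
      | succ n ih =>
        have e : Xm (n + 1) - algebraMap ℂ V (z ^ ((n : ℤ) + 1))
            = Xm 1 * (Xm n - algebraMap ℂ V (z ^ (n : ℤ)))
              + algebraMap ℂ V (z ^ (n : ℤ)) * (Xm 1 - algebraMap ℂ V z) := by
          rw [Xm_add, zpow_add₀ hz0, zpow_one, map_mul]; ring
        rw [e]
        exact P.add_mem (P.mul_mem_left _ ih) (P.mul_mem_left _ hzP')
      | pred n ih =>
        have e : Xm (-n - 1) - algebraMap ℂ V (z ^ (-(n : ℤ) - 1))
            = Xm (-1) * (Xm (-n) - algebraMap ℂ V (z ^ (-(n : ℤ))))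
              + (- Xm (-1) * algebraMap ℂ V (z ^ (-(n : ℤ) - 1))) * (Xm 1 - algebraMap ℂ V z) := by
          have e1 : algebraMap ℂ V (z ^ (-(n : ℤ)))
              = algebraMap ℂ V (z ^ (-(n : ℤ) - 1)) * algebraMap ℂ V z := by
            rw [← map_mul, ← zpow_add_one₀ hz0, sub_add_cancel]
          rw [e1, sub_eq_add_neg (-(n : ℤ)) 1, Xm_add]
          linear_combination (algebraMap ℂ V (z ^ (-(n : ℤ) + -1))) * Ctx.Xm_inv
        rw [e]
        exact P.add_mem (P.mul_mem_left _ ih) (P.mul_mem_left _ hzP')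
    | hadd f g hf hg =>
      have := P.add_mem hf hg
      rw [map_add, map_add]
      convert this using 1
      ring
    | hsmul a f hf =>
      have := P.mul_mem_left (algebraMap ℂ V a) hf
      rw [map_smul, smul_eq_mul, map_mul, Algebra.smul_def, ← mul_sub]
      exact this
  intro f hf
  by_contra hne
  have h1 : f ∈ P := hAP hf
  have h2 := P.sub_mem h1 (key f)
  rw [sub_sub_cancel] at h2
  exact hP.ne_top (P.eq_top_of_isUnit_mem h2 ((IsUnit.mk0 _ hne).map _))

theorem M_dichotomy (h : Ctx2 q2 t2 S Top Pi N κ) (M : Submodule ℂ V)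
    (hMT : ∀ f ∈ M, Top f ∈ M)
    (hMP : ∀ f ∈ M, Pi f ∈ M) (hMX : ∀ f ∈ M, Xm 1 * f ∈ M)
    (hI : Isub q2 N κ ≤ M) (hM : M ≠ ⊤) : M = Isub q2 N κ := by
  obtain ⟨j, hj⟩ := h.root_M M hMP hMX hI hM
  exact le_antisymm (h.prop_M M hMT hMP j hj) hI

abbrev Jset (N : ℕ) (κ : ℤ) : Finset ℤ := Finset.Ioc (-κ) (2 * N - κ)
abbrev Eset (N : ℕ) (κ : ℤ) : Finset ℤ := Finset.Ioc (-κ) κ ∪ Finset.Ioc (N - κ) (N + κ)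

def Phi (q2 : ℂ) (N : ℕ) (κ : ℤ) : V →ₗ[ℂ] (Jset N κ → ℂ) × (Eset N κ → ℂ) :=
  LinearMap.prod (LinearMap.pi fun j => evl (q2 ^ (j : ℤ)))
    (LinearMap.pi fun j => evl (q2 ^ (j : ℤ)) ∘ₗ Dl)

theorem E_sub_J (h : Ctx2 q2 t2 S Top Pi N κ) {j : ℤ} (hj : j ∈ Eset N κ) : j ∈ Jset N κ := by
  have := h.hN
  have := h.hκ
  simp only [Finset.mem_union, Finset.mem_Ioc] at hj ⊢
  omega

theorem interp (h : Ctx2 q2 t2 S Top Pi N κ) (v : ℤ → ℂ) :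
    ∃ f : V, ∀ j ∈ Jset N κ, evl (q2 ^ j) f = v j := by
  have hinj : Set.InjOn (fun j : ℤ => q2 ^ j) (Jset N κ : Set ℤ) := by
    intro i hi j hj hij
    have h1 := h.pt_congr.mp hij
    simp only [Finset.coe_Ioc, Set.mem_Ioc] at hi hj
    have := Int.eq_zero_of_abs_lt_dvd h1 (by rw [abs_lt]; constructor <;> omega)
    omega
  refine ⟨Polynomial.toLaurent (Lagrange.interpolate (Jset N κ) (fun j : ℤ => q2 ^ j) v), ?_⟩
  intro j hj
  rw [evl_toLaurent]
  exact Lagrange.eval_interpolate_at_node v hinj hj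

theorem Phi_surj (h : Ctx2 q2 t2 S Top Pi N κ) : Function.Surjective (Phi q2 N κ) := by
  classical
  rintro ⟨v, w⟩
  obtain ⟨f0, hf0⟩ := h.interp (fun j => if hj : j ∈ Jset N κ then v ⟨j, hj⟩ else 0)
  obtain ⟨g, hg⟩ := h.interp (fun j => (if hj : j ∈ Eset N κ then
    (w ⟨j, hj⟩ - evl (q2 ^ j) (Dl f0)) / (2 * N) else 0))
  refine ⟨f0 + (Xm (2 * N) - 1) * g, ?_⟩
  have hN0 : (N : ℂ) ≠ 0 := by exact_mod_cast h.Npos.ne'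
  ext ⟨j, hj⟩
  · change evl (q2 ^ j) (f0 + (Xm (2 * N) - 1) * g) = v ⟨j, hj⟩
    rw [map_add, evl_mul _ (h.pt_ne j), h.evl_big, hf0 j hj, dif_pos hj]
    ring
  · change evl (q2 ^ j) (Dl (f0 + (Xm (2 * N) - 1) * g)) = w ⟨j, hj⟩
    rw [map_add, map_add, h.evl_Dbig, hg j (h.E_sub_J hj), dif_pos hj]
    field_simp
    ring

theorem Phi_ker (h : Ctx2 q2 t2 S Top Pi N κ) : LinearMap.ker (Phi q2 N κ) = Isub q2 N κ := by
  have hN := h.hN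
  have hκ := h.hκ
  ext f
  rw [LinearMap.mem_ker, mem_Isub]
  constructor
  · intro hf
    have hv : ∀ j ∈ Jset N κ, evl (q2 ^ j) f = 0 := fun j hj =>
      congrFun (congrArg Prod.fst hf) ⟨j, hj⟩
    have hw : ∀ j ∈ Eset N κ, evl (q2 ^ j) (Dl f) = 0 := fun j hj =>
      congrFun (congrArg Prod.snd hf) ⟨j, hj⟩
    have red : ∀ j : ℤ, ∃ j' ∈ Jset N κ, 2 * (N : ℤ) ∣ j - j' := by
      intro j
      have hm := Int.emod_add_mul_ediv (j + κ - 1) (2 * (N : ℤ))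
      have hm1 := Int.emod_nonneg (j + κ - 1) (by omega : 2 * (N : ℤ) ≠ 0)
      have hm2 := Int.emod_lt_of_pos (j + κ - 1) (by omega : 0 < 2 * (N : ℤ))
      refine ⟨(j + κ - 1) % (2 * (N : ℤ)) - κ + 1, ?_, ?_⟩
      · simp only [Finset.mem_Ioc]
        omega
      · refine ⟨(j + κ - 1) / (2 * (N : ℤ)), ?_⟩
        omega
    refine ⟨fun j => ?_, fun j hj => ?_⟩
    · obtain ⟨j', h1, h2⟩ := red j
      rw [h.pt_congr.mpr h2]
      exact hv _ h1
    · obtain ⟨j', h1, h2⟩ := red j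
      rw [h.pt_congr.mpr h2]
      apply hw
      obtain ⟨a, ha, h3, h4⟩ := hj
      obtain ⟨d, hd⟩ := h2
      obtain ⟨c, rfl⟩ := ha
      simp only [Finset.mem_Ioc, Finset.mem_union] at h1 ⊢
      have e : (N : ℤ) * c = N * (c - 2 * d) + (j - j') := by rw [hd]; ring
      have l1 : -1 < c - 2 * d := by
        by_contra hcon
        have : (N : ℤ) * (c - 2 * d) ≤ N * (-1) := by gcongr; omega
        omega
      have l2 : c - 2 * d < 2 := by
        by_contra hcon
        have : (N : ℤ) * 2 ≤ N * (c - 2 * d) := by gcongr; omega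
        omega
      rcases (by omega : c - 2 * d = 0 ∨ c - 2 * d = 1) with h5 | h5 <;> rw [h5] at e
      · left; omega
      · right; omega
  · rintro ⟨h1, h2⟩
    ext ⟨j, hj⟩
    · exact h1 j
    · refine h2 j ?_
      simp only [Finset.mem_Ioc, Finset.mem_union] at hj
      rcases hj with hj | hj
      · exact ⟨0, dvd_zero _, by omega, by omega⟩
      · exact ⟨N, dvd_refl _, by omega, by omega⟩

theorem finrank_I (h : Ctx2 q2 t2 S Top Pi N κ) :
    Module.finrank ℂ (V ⧸ Isub q2 N κ) = 2 * N + 4 * κ.natAbs := by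
  have hN := h.hN
  have hκ := h.hκ
  rw [← h.Phi_ker, ((Phi q2 N κ).quotKerEquivOfSurjective h.Phi_surj).finrank_eq,
    Module.finrank_prod, Module.finrank_fintype_fun_eq_card, Module.finrank_fintype_fun_eq_card,
    Fintype.card_coe, Fintype.card_coe, Finset.card_union_of_disjoint, Int.card_Ioc, Int.card_Ioc,
    Int.card_Ioc]
  · omega
  · rw [Finset.disjoint_left]
    intro j h1 h2
    simp only [Finset.mem_Ioc] at h1 h2
    omega

end Ctx2

structure PCtx (q2 t2 : ℂ) (S Top Pi : V →ₗ[ℂ] V) (ev : V →ₗ[ℂ] ℂ) (Yz : ℤ → V →ₗ[ℂ] V)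
    (pair : V →ₗ[ℂ] V →ₗ[ℂ] ℂ) : Prop extends Ctx q2 t2 S Top Pi where
  hev : ∀ m : ℤ, ev (Xm m) = t2 ^ (-m)
  hYz0 : Yz 0 = LinearMap.id
  hYz1 : Yz 1 = Pi ∘ₗ Top
  hYzadd : ∀ a b : ℤ, Yz (a + b) = Yz a ∘ₗ Yz b
  hpair : ∀ (m : ℤ) (g : V), pair (Xm m) g = ev (Yz (-m) g)
  hc : t2 - t2⁻¹ ≠ 0

namespace PCtx

variable {q2 t2 : ℂ} {S Top Pi : V →ₗ[ℂ] V} {ev : V →ₗ[ℂ] ℂ} {Yz : ℤ → V →ₗ[ℂ] V}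
    {pair : V →ₗ[ℂ] V →ₗ[ℂ] ℂ}

theorem ev_eq (h : PCtx q2 t2 S Top Pi ev Yz pair) (f : V) : ev f = evl t2⁻¹ f :=
  V_ext (by intro m; rw [h.hev, evl_Xm, zpow_neg, inv_zpow]) f

theorem ev_T (h : PCtx q2 t2 S Top Pi ev Yz pair) (f : V) : ev (Top f) = t2 * ev f := by
  have ht := h.ht2
  have e := h.evl_T (inv_ne_zero ht) f
  rw [h.ev_eq, h.ev_eq]
  have h0 : t2 * t2⁻¹ ^ 2 - t2⁻¹ = 0 := by field_simp; ring
  rw [h0, zero_mul] at e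
  have h1 : t2⁻¹ ^ 2 - 1 = - t2⁻¹ * (t2 - t2⁻¹) := by field_simp; ring
  rw [h1] at e
  have h2 : - t2⁻¹ * (t2 - t2⁻¹) ≠ 0 := mul_ne_zero (neg_ne_zero.mpr (inv_ne_zero ht)) h.hc
  apply mul_left_cancel₀ h2
  rw [e]
  field_simp
  ring

theorem ev_Xi (h : PCtx q2 t2 S Top Pi ev Yz pair) (f : V) : ev (Xm (-1) * f) = t2 * ev f := by
  rw [h.ev_eq, h.ev_eq, evl_mul _ (inv_ne_zero h.ht2), evl_Xm]
  simp

/-- inverse of `Top` -/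
def Ti (t2 : ℂ) (Top : V →ₗ[ℂ] V) : V →ₗ[ℂ] V := Top - (t2 - t2⁻¹) • LinearMap.id

theorem Ti_apply (f : V) : Ti t2 Top f = Top f - (t2 - t2⁻¹) • f := rfl

theorem T_Ti (h : PCtx q2 t2 S Top Pi ev Yz pair) (f : V) : Top (Ti t2 Top f) = f := by
  rw [Ti_apply, map_sub, map_smul, h.T_T]; abel

theorem Ti_T (h : PCtx q2 t2 S Top Pi ev Yz pair) (f : V) : Ti t2 Top (Top f) = f := by
  rw [Ti_apply, h.T_T]; abel

theorem Y_apply (h : PCtx q2 t2 S Top Pi ev Yz pair) (f : V) : Yz 1 f = Pi (Top f) := by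
  rw [h.hYz1]; rfl

theorem Yi_apply (h : PCtx q2 t2 S Top Pi ev Yz pair) (f : V) : Yz (-1) f = Ti t2 Top (Pi f) := by
  have e : f = Yz 1 (Ti t2 Top (Pi f)) := by rw [h.Y_apply, h.T_Ti, h.Pi_Pi]
  have e2 : Yz (-1) (Yz 1 (Ti t2 Top (Pi f))) = Ti t2 Top (Pi f) := by
    rw [← LinearMap.comp_apply, ← h.hYzadd, neg_add_cancel, h.hYz0]; rfl
  rw [← e] at e2
  exact e2

theorem Y_Yi (h : PCtx q2 t2 S Top Pi ev Yz pair) (f : V) : Yz 1 (Yz (-1) f) = f := by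
  rw [h.Y_apply, h.Yi_apply, h.T_Ti, h.Pi_Pi]

theorem Yi_Y (h : PCtx q2 t2 S Top Pi ev Yz pair) (f : V) : Yz (-1) (Yz 1 f) = f := by
  rw [h.Y_apply, h.Yi_apply, h.Pi_Pi, h.Ti_T]

theorem pair_Xm (h : PCtx q2 t2 S Top Pi ev Yz pair) (a : ℤ) (f g : V) :
    pair (Xm a * f) g = pair f (Yz (-a) g) := by
  induction f using V_induct with
  | hX m =>
    rw [← Xm_add, h.hpair, h.hpair, neg_add, add_comm, h.hYzadd]; rfl
  | hadd f g hf hg =>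
    rw [mul_add, map_add, map_add, LinearMap.add_apply, LinearMap.add_apply, hf, hg]
  | hsmul c f hf =>
    rw [mul_smul_comm, map_smul, map_smul, LinearMap.smul_apply, LinearMap.smul_apply, hf]

theorem pair_one (h : PCtx q2 t2 S Top Pi ev Yz pair) (g : V) : pair 1 g = ev g := by
  rw [← Xm_zero, h.hpair, neg_zero, h.hYz0]; rfl

theorem T_Xi (h : PCtx q2 t2 S Top Pi ev Yz pair) (f : V) :
    Top (Xm (-1) * f) = Xm 1 * Top f + (t2 - t2⁻¹) • (Xm (-1) * f) := by
  have e := h.T_X (Xm (-1) * f)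
  rw [← mul_assoc, Ctx.Xm_inv, one_mul] at e
  rw [e, ← mul_assoc, Ctx.Xm_inv, one_mul]
  abel

/-- an operator identity checked on monomials by induction -/
theorem adj_induct (h : PCtx q2 t2 S Top Pi ev Yz pair) (A B : V →ₗ[ℂ] V)
    (h0 : ∀ g, pair (A 1) g = pair 1 (B g))
    (hu : ∀ f, (∀ g, pair (A f) g = pair f (B g)) →
      ∀ g, pair (A (Xm 1 * f)) g = pair (Xm 1 * f) (B g))
    (hd : ∀ f, (∀ g, pair (A f) g = pair f (B g)) →
      ∀ g, pair (A (Xm (-1) * f)) g = pair (Xm (-1) * f) (B g)) (f g : V) :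
    pair (A f) g = pair f (B g) := by
  induction f using V_induct generalizing g with
  | hX m =>
    induction m using Int.induction_on generalizing g with
    | zero => rw [Xm_zero]; exact h0 g
    | succ n ih =>
      rw [add_comm, Xm_add]
      exact hu _ ih g
    | pred n ih =>
      rw [sub_eq_add_neg, add_comm, Xm_add]
      exact hd _ ih g
  | hadd f g hf hg => simp only [map_add, LinearMap.add_apply, hf, hg]
  | hsmul c f hf => simp only [map_smul, LinearMap.smul_apply, hf]

theorem adj_T (h : PCtx q2 t2 S Top Pi ev Yz pair) (f g : V) :
    pair (Top f) g = pair f (Top g) := by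
  apply h.adj_induct Top Top
  · intro g
    rw [h.T_one, map_smul, LinearMap.smul_apply, h.pair_one, h.pair_one, h.ev_T, smul_eq_mul]
  · intro f ih g
    rw [h.T_X, h.pair_Xm, h.pair_Xm, map_sub, LinearMap.sub_apply, ih, map_smul,
      LinearMap.smul_apply, ← map_smul, ← map_sub, neg_neg, h.Yi_apply, Ti_apply, h.Y_apply]
  · intro f ih g
    rw [h.T_Xi, map_add, LinearMap.add_apply, map_smul, LinearMap.smul_apply, h.pair_Xm, h.pair_Xm,
      h.pair_Xm, ih, neg_neg, h.Yi_apply, h.T_Ti, h.Y_apply, h.Y_apply, h.T_T]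
    simp only [map_add, map_smul]
    exact add_comm _ _

/-- multiplication by X^-1 followed by the inverse of T -/
def Rop (t2 : ℂ) (Top : V →ₗ[ℂ] V) : V →ₗ[ℂ] V := Ti t2 Top ∘ₗ LinearMap.mulLeft ℂ (Xm (-1))

theorem Rop_apply (f : V) : Rop t2 Top f = Ti t2 Top (Xm (-1) * f) := rfl

theorem Rop_Y (h : PCtx q2 t2 S Top Pi ev Yz pair) (f : V) :
    q2 • Rop t2 Top (Yz 1 f) = Yz (-1) (Rop t2 Top f) := by
  have e : Rop t2 Top f = Xm 1 * Top f := by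
    have e1 : Top (Xm 1 * Top f) = Xm (-1) * f := by
      rw [h.T_X, h.T_T]; congr 1; abel
    rw [Rop_apply, ← e1, h.Ti_T]
  rw [e, h.Yi_apply, h.Pi_X, map_smul, Rop_apply, h.Y_apply]

theorem Rop_Yi (h : PCtx q2 t2 S Top Pi ev Yz pair) (f : V) :
    q2⁻¹ • Rop t2 Top (Yz (-1) f) = Yz 1 (Rop t2 Top f) := by
  have e := h.Rop_Y (Yz (-1) f)
  rw [h.Y_Yi] at e
  have e2 := congrArg (Yz 1) e
  rw [h.Y_Yi, map_smul] at e2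
  rw [← e2, smul_smul, inv_mul_cancel₀ h.hq2, one_smul]

theorem Pi_Xi (h : PCtx q2 t2 S Top Pi ev Yz pair) (f : V) :
    Pi (Xm (-1) * f) = q2⁻¹ • (Xm 1 * Pi f) := by
  have e := h.Pi_X (Xm (-1) * f)
  rw [← mul_assoc, Ctx.Xm_inv, one_mul] at e
  rw [e, mul_smul_comm, smul_smul, inv_mul_cancel₀ h.hq2, one_smul, ← mul_assoc, Ctx.Xm_inv,
    one_mul]

theorem adj_Pi (h : PCtx q2 t2 S Top Pi ev Yz pair) (f g : V) :
    pair (Pi f) g = pair f (Rop t2 Top g) := by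
  apply h.adj_induct Pi (Rop t2 Top)
  · intro g
    have e : Pi 1 = 1 := by rw [← Xm_zero, h.hPi]; simp
    rw [e, h.pair_one, h.pair_one, Rop_apply]
    have e2 := h.ev_T (Ti t2 Top (Xm (-1) * g))
    rw [h.T_Ti, h.ev_Xi] at e2
    exact mul_left_cancel₀ h.ht2 e2
  · intro f ih g
    rw [h.Pi_X, map_smul, LinearMap.smul_apply, h.pair_Xm, h.pair_Xm, ih, ← map_smul, neg_neg,
      h.Rop_Y]
  · intro f ih g
    rw [h.Pi_Xi, map_smul, LinearMap.smul_apply, h.pair_Xm, h.pair_Xm, ih, ← map_smul, neg_neg,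
      h.Rop_Yi]

theorem mem_Rad {f : V} : f ∈ Rad pair ↔ ∀ g, pair f g = 0 := by
  rw [Rad, LinearMap.mem_ker]
  constructor
  · intro e g; rw [e]; rfl
  · intro e; exact LinearMap.ext e

theorem Rad_inv (h : PCtx q2 t2 S Top Pi ev Yz pair) (f : V) (hf : f ∈ Rad pair) :
    Top f ∈ Rad pair ∧ Pi f ∈ Rad pair ∧ Xm 1 * f ∈ Rad pair := by
  simp only [mem_Rad] at hf ⊢
  exact ⟨fun g => by rw [h.adj_T, hf], fun g => by rw [h.adj_Pi, hf],
    fun g => by rw [h.pair_Xm, hf]⟩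

theorem pair_Xi (h : PCtx q2 t2 S Top Pi ev Yz pair) (f g : V) :
    pair f (Xm (-1) * g) = pair (Yz 1 f) g := by
  rw [h.Y_apply, h.adj_Pi, h.adj_T, Rop_apply, h.T_Ti]

theorem pair_X (h : PCtx q2 t2 S Top Pi ev Yz pair) (f g : V) :
    pair f (Xm 1 * g) = pair (Yz (-1) f) g := by
  have e := h.pair_Xi (Yz (-1) f) (Xm 1 * g)
  rw [h.Y_Yi, ← mul_assoc, mul_comm (Xm (-1)), Ctx.Xm_inv, one_mul] at e
  exact e.symm

theorem Yz_one (h : PCtx q2 t2 S Top Pi ev Yz pair) (m : ℤ) : Yz m 1 = t2 ^ m • 1 := by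
  have e1 : Yz 1 1 = t2 • 1 := by
    have e : Pi 1 = 1 := by rw [← Xm_zero, h.hPi]; simp
    rw [h.Y_apply, h.T_one, map_smul, e]
  have e2 : Yz (-1) 1 = t2⁻¹ • 1 := by
    have := h.Yi_Y 1
    rw [e1, map_smul] at this
    rw [← this, smul_smul, inv_mul_cancel₀ h.ht2, one_smul, this]
  induction m using Int.induction_on with
  | zero => rw [h.hYz0]; simp
  | succ n ih =>
    rw [h.hYzadd, LinearMap.comp_apply, e1, map_smul, ih, smul_smul, zpow_add_one₀ h.ht2, mul_comm]
  | pred n ih =>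
    rw [sub_eq_add_neg, h.hYzadd, LinearMap.comp_apply, e2, map_smul, ih, smul_smul,
      ← sub_eq_add_neg, zpow_sub_one₀ h.ht2, mul_comm]

theorem pair_right_one (h : PCtx q2 t2 S Top Pi ev Yz pair) (f : V) : pair f 1 = ev f := by
  refine V_ext (A := pair.flip 1) (B := ev) ?_ f
  intro m
  rw [LinearMap.flip_apply, h.hpair, h.Yz_one, map_smul, h.hev, ← Xm_zero, h.hev]
  simp

theorem le_Rad (h : PCtx q2 t2 S Top Pi ev Yz pair) (M : Submodule ℂ V)
    (hMT : ∀ f ∈ M, Top f ∈ M) (hMP : ∀ f ∈ M, Pi f ∈ M) (hM : ∀ f ∈ M, ev f = 0) :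
    M ≤ Rad pair := by
  have hY : ∀ f ∈ M, Yz 1 f ∈ M := fun f hf => by rw [h.Y_apply]; exact hMP _ (hMT _ hf)
  have hYi : ∀ f ∈ M, Yz (-1) f ∈ M := fun f hf => by
    rw [h.Yi_apply, Ti_apply]
    exact M.sub_mem (hMT _ (hMP _ hf)) (M.smul_mem _ (hMP _ hf))
  intro f hf
  rw [mem_Rad]
  intro g
  induction g using V_induct generalizing f with
  | hX m =>
    induction m using Int.induction_on generalizing f with
    | zero => rw [Xm_zero, h.pair_right_one]; exact hM f hf
    | succ n ih =>
      rw [add_comm, Xm_add, h.pair_X]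
      exact ih (hYi f hf)
    | pred n ih =>
      rw [sub_eq_add_neg, add_comm, Xm_add, h.pair_Xi]
      exact ih (hY f hf)
  | hadd g g' h1 h2 => rw [map_add, h1 hf, h2 hf, add_zero]
  | hsmul c g h1 => rw [map_smul, h1 hf, smul_zero]

theorem Rad_ne_top (h : PCtx q2 t2 S Top Pi ev Yz pair) : Rad pair ≠ ⊤ := by
  intro e
  have h1 : (1 : V) ∈ Rad pair := by rw [e]; trivial
  rw [mem_Rad] at h1
  have := h1 1
  rw [h.pair_one, ← Xm_zero, h.hev] at this
  simp at this

end PCtx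

/-- at a primitive `2N`-th root of unity `q½` with `t = q^k`,
`−N/2 ≤ k < 0`: `Rad` is an `A`-invariant subspace of `V`, the quotient
`V' = V/Rad` has dimension `2N + 4|k|`, and `V'` is a simple `A`-module: the
only subspaces of `V'` invariant under the operators induced by `T`, `π` and
multiplication by `X` are `{0}` and `V'`. -/
theorem stmt2
    (q2 t2 : ℂ) (hq2 : q2 ≠ 0) (ht2 : t2 ≠ 0)
    (S Top Pi Y : V →ₗ[ℂ] V)
    (hS : ∀ m : ℤ, S (Xm m) = Xm (-m))
    (hPi : ∀ m : ℤ, Pi (Xm m) = q2 ^ m • Xm (-m))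
    (hT : ∀ f : V, (Xm 2 - 1) * Top f
        = t2 • ((Xm 2 - 1) * S f) + (t2 - t2⁻¹) • (S f - f))
    (hY : Y = Pi ∘ₗ Top)
    (ev : V →ₗ[ℂ] ℂ) (hev : ∀ m : ℤ, ev (Xm m) = t2 ^ (-m))
    (Yz : ℤ → V →ₗ[ℂ] V)
    (hYz0 : Yz 0 = LinearMap.id) (hYz1 : Yz 1 = Y)
    (hYzadd : ∀ a b : ℤ, Yz (a + b) = Yz a ∘ₗ Yz b)
    (pair : V →ₗ[ℂ] V →ₗ[ℂ] ℂ)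
    (hpair : ∀ (m : ℤ) (g : V), pair (Xm m) g = ev (Yz (-m) g))
    (N : ℕ) (hN : 0 < N) (hq2prim : IsPrimitiveRoot q2 (2 * N))
    (k : ℤ) (hk1 : -(N : ℤ) ≤ 2 * k) (hk2 : k < 0) (ht2k : t2 = q2 ^ k)
    :
    (∀ f ∈ Rad pair, Top f ∈ Rad pair ∧ Pi f ∈ Rad pair ∧ Xm 1 * f ∈ Rad pair) ∧
    Module.finrank ℂ (V ⧸ Rad pair) = 2 * N + 4 * k.natAbs ∧
    ∃ (hT' : Rad pair ≤ (Rad pair).comap Top)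
      (hP' : Rad pair ≤ (Rad pair).comap Pi)
      (hX' : Rad pair ≤ (Rad pair).comap (LinearMap.mulLeft ℂ (Xm 1))),
      ∀ W : Submodule ℂ (V ⧸ Rad pair),
        (∀ v ∈ W, (Rad pair).mapQ (Rad pair) Top hT' v ∈ W ∧
            (Rad pair).mapQ (Rad pair) Pi hP' v ∈ W ∧
            (Rad pair).mapQ (Rad pair) (LinearMap.mulLeft ℂ (Xm 1)) hX' v ∈ W) →
        W = ⊥ ∨ W = ⊤ := by
  have c0 : Ctx q2 t2 S Top Pi := ⟨hq2, ht2, hS, hPi, hT⟩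
  have c2 : Ctx2 q2 t2 S Top Pi N (-k) :=
    { toCtx := c0, hprim := hq2prim, hκ := by omega, hN := by omega, htk := by rw [neg_neg, ht2k] }
  have cp : PCtx q2 t2 S Top Pi ev Yz pair :=
    { toCtx := c0, hev := hev, hYz0 := hYz0, hYz1 := by rw [hYz1, hY], hYzadd := hYzadd,
      hpair := hpair, hc := c2.c_ne }
  have hinv := cp.Rad_inv
  have hIR : Isub q2 N (-k) ≤ Rad pair := by
    refine cp.le_Rad _ (fun f hf => c2.I_T hf) (fun f hf => c2.I_Pi hf) (fun f hf => ?_)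
    rw [cp.ev_eq, ht2k, ← zpow_neg]
    exact hf.1 _
  have hR : Rad pair = Isub q2 N (-k) :=
    c2.M_dichotomy _ (fun f hf => (hinv f hf).1) (fun f hf => (hinv f hf).2.1)
      (fun f hf => (hinv f hf).2.2) hIR cp.Rad_ne_top
  refine ⟨hinv, ?_, fun f hf => (hinv f hf).1, fun f hf => (hinv f hf).2.1,
    fun f hf => (hinv f hf).2.2, ?_⟩
  · rw [hR, c2.finrank_I, Int.natAbs_neg]
  · intro W hW
    by_cases hM : W.comap (Rad pair).mkQ = ⊤
    · right
      rw [eq_top_iff]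
      intro w _
      obtain ⟨f, rfl⟩ := (Rad pair).mkQ_surjective w
      have : f ∈ W.comap (Rad pair).mkQ := by rw [hM]; trivial
      exact this
    · left
      have hle : Rad pair ≤ W.comap (Rad pair).mkQ := by
        intro f hf
        rw [Submodule.mem_comap, Submodule.mkQ_apply, (Submodule.Quotient.mk_eq_zero _).mpr hf]
        exact W.zero_mem
      have hMI := c2.M_dichotomy (W.comap (Rad pair).mkQ) (fun f hf => (hW _ hf).1)
        (fun f hf => (hW _ hf).2.1) (fun f hf => (hW _ hf).2.2) (hIR.trans hle) hM
      rw [eq_bot_iff]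
      intro w hw
      obtain ⟨f, rfl⟩ := (Rad pair).mkQ_surjective w
      have h1 : f ∈ W.comap (Rad pair).mkQ := hw
      rw [hMI, ← hR] at h1
      rw [Submodule.mem_bot, Submodule.mkQ_apply]
      exact (Submodule.Quotient.mk_eq_zero _).mpr h1
end
end

section
/- For arbitrary nonzero q½, t½: Rad is an A-submodule of V; in the quotient V' = V/Rad, for every μ ∈ ℂ the eigenspace ker(Ȳ − μ) of the operator Ȳ induced by Y is at most one-dimensional; and if E ∈ V is such that its image in V' is a nonzero eigenvector of Ȳ, then ev(E) ≠ 0. -/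
noncomputable section

theorem V_ind (P : V → Prop) (h1 : P 1) (hadd : ∀ f g, P f → P g → P (f + g))
    (hsmul : ∀ (c : ℂ) f, P f → P (c • f))
    (hx : ∀ f, P f → P (Xm 1 * f)) (hy : ∀ f, P f → P (Xm (-1) * f)) (f : V) : P f := by
  have hm : ∀ m : ℤ, P (Xm m) := by
    intro m
    induction m using Int.induction_on with
    | zero => rw [Xm_zero]; exact h1
    | succ i ih =>
      have := hx _ ih
      rwa [Xm_mul, add_comm] at this
    | pred i ih =>
      have := hy _ ih
      rwa [Xm_mul, add_comm, ← sub_eq_add_neg] at this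
  refine LaurentPolynomial.induction_on' f (fun p q hp hq => hadd p q hp hq) ?_
  intro n a
  have := hsmul a _ (hm n)
  rwa [LaurentPolynomial.smul_eq_C_mul] at this

theorem V_mul_of_Xm (L : V →ₗ[ℂ] V) (k n : ℤ) (c : ℂ)
    (h : ∀ m, L (Xm (k + m)) = c • (Xm n * L (Xm m))) (f : V) :
    L (Xm k * f) = c • (Xm n * L f) := by
  refine LaurentPolynomial.induction_on' f ?_ ?_
  · intro p q hp hq
    rw [mul_add, map_add, hp, hq, map_add, mul_add, smul_add]
  · intro m a
    have e : (LaurentPolynomial.C a * LaurentPolynomial.T m : V) = a • Xm m := by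
      rw [LaurentPolynomial.smul_eq_C_mul]; rfl
    rw [e, mul_smul_comm, map_smul, Xm_mul, h, map_smul, mul_smul_comm, smul_comm]

theorem ev_mul_of_Xm (L : V →ₗ[ℂ] ℂ) (k : ℤ) (c : ℂ)
    (h : ∀ m, L (Xm (k + m)) = c * (L (Xm m))) (f : V) :
    L (Xm k * f) = c * L f := by
  refine LaurentPolynomial.induction_on' f ?_ ?_
  · intro p q hp hq
    rw [mul_add, map_add, hp, hq, map_add, mul_add]
  · intro m a
    have e : (LaurentPolynomial.C a * LaurentPolynomial.T m : V) = a • Xm m := by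
      rw [LaurentPolynomial.smul_eq_C_mul]; rfl
    rw [e, mul_smul_comm, map_smul, Xm_mul, h, map_smul, smul_eq_mul, smul_eq_mul]; ring

theorem X2_ne : (Xm 2 - 1 : V) ≠ 0 := by
  intro h
  rw [sub_eq_zero, ← Xm_zero] at h
  have h3 : (Finsupp.single (2 : ℤ) (1 : ℂ)) = Finsupp.single 0 1 := congrArg AddMonoidAlgebra.coeff h
  have := Finsupp.single_left_injective (one_ne_zero) h3
  omega

/-- for arbitrary nonzero `q½, t½`: `Rad` is an `A`-submodule of
`V`; in `V' = V/Rad` every eigenspace of the operator `Ȳ` induced by `Y` is at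
most one-dimensional; and if the image of `E ∈ V` in `V'` is a nonzero
`Ȳ`-eigenvector then `ev(E) ≠ 0`. -/
theorem stmt7
    (q2 t2 : ℂ) (hq2 : q2 ≠ 0) (ht2 : t2 ≠ 0)
    (S Top Pi Y : V →ₗ[ℂ] V)
    (hS : ∀ m : ℤ, S (Xm m) = Xm (-m))
    (hPi : ∀ m : ℤ, Pi (Xm m) = q2 ^ m • Xm (-m))
    (hT : ∀ f : V, (Xm 2 - 1) * Top f
        = t2 • ((Xm 2 - 1) * S f) + (t2 - t2⁻¹) • (S f - f))
    (hY : Y = Pi ∘ₗ Top)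
    (ev : V →ₗ[ℂ] ℂ) (hev : ∀ m : ℤ, ev (Xm m) = t2 ^ (-m))
    (Yz : ℤ → V →ₗ[ℂ] V)
    (hYz0 : Yz 0 = LinearMap.id) (hYz1 : Yz 1 = Y)
    (hYzadd : ∀ a b : ℤ, Yz (a + b) = Yz a ∘ₗ Yz b)
    (pair : V →ₗ[ℂ] V →ₗ[ℂ] ℂ)
    (hpair : ∀ (m : ℤ) (g : V), pair (Xm m) g = ev (Yz (-m) g))
    :
    (∀ f ∈ Rad pair, Top f ∈ Rad pair ∧ Pi f ∈ Rad pair ∧ Xm 1 * f ∈ Rad pair) ∧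
    ∃ hY' : Rad pair ≤ (Rad pair).comap Y,
      (∀ (c : ℂ) (v w : V ⧸ Rad pair),
          (Rad pair).mapQ (Rad pair) Y hY' v = c • v →
          (Rad pair).mapQ (Rad pair) Y hY' w = c • w →
          v ≠ 0 → ∃ d : ℂ, w = d • v) ∧
      (∀ E : V, (Rad pair).mkQ E ≠ 0 →
        (∃ c : ℂ, (Rad pair).mapQ (Rad pair) Y hY' ((Rad pair).mkQ E)
            = c • (Rad pair).mkQ E) →
        ev E ≠ 0) := by
  have xy : ∀ f : V, Xm 1 * (Xm (-1) * f) = f := by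
    intro f; rw [← mul_assoc, Xm_mul]; norm_num [Xm_zero]
  have yx : ∀ f : V, Xm (-1) * (Xm 1 * f) = f := by
    intro f; rw [← mul_assoc, Xm_mul]; norm_num [Xm_zero]
  have hS1 : S 1 = 1 := by have := hS 0; simpa [Xm_zero] using this
  have hSx : ∀ f, S (Xm 1 * f) = Xm (-1) * S f := by
    intro f
    have := V_mul_of_Xm S 1 (-1) 1 (by
      intro m; rw [hS, hS, Xm_mul, one_smul, neg_add]) f
    rwa [one_smul] at this
  have hP1 : Pi 1 = 1 := by have := hPi 0; simpa [Xm_zero] using this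
  have hPx : ∀ f, Pi (Xm 1 * f) = q2 • (Xm (-1) * Pi f) := by
    refine V_mul_of_Xm Pi 1 (-1) q2 ?_
    intro m
    rw [hPi, hPi, mul_smul_comm, Xm_mul, smul_smul, neg_add, zpow_add₀ hq2, zpow_one]
  have hPy : ∀ f, Pi (Xm (-1) * f) = q2⁻¹ • (Xm 1 * Pi f) := by
    refine V_mul_of_Xm Pi (-1) 1 q2⁻¹ ?_
    intro m
    rw [hPi, hPi, mul_smul_comm, Xm_mul, smul_smul, neg_add, zpow_add₀ hq2, zpow_neg_one, neg_neg]
  have hPP : ∀ f, Pi (Pi f) = f := by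
    intro f
    induction f using V_ind with
    | h1 => rw [hP1, hP1]
    | hadd f g hf hg => rw [map_add, map_add, hf, hg]
    | hsmul c f hf => rw [map_smul, map_smul, hf]
    | hx f hf => rw [hPx, map_smul, hPy, hf, smul_smul, mul_inv_cancel₀ hq2, one_smul]
    | hy f hf => rw [hPy, map_smul, hPx, hf, smul_smul, inv_mul_cancel₀ hq2, one_smul]
  have he1 : ev 1 = 1 := by have := hev 0; simpa [Xm_zero] using this
  have hex : ∀ f, ev (Xm 1 * f) = t2⁻¹ * ev f := by
    refine ev_mul_of_Xm ev 1 _ ?_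
    intro m; rw [hev, hev, neg_add, zpow_add₀ ht2, zpow_neg_one]
  have hey : ∀ f, ev (Xm (-1) * f) = t2 * ev f := by
    refine ev_mul_of_Xm ev (-1) _ ?_
    intro m; rw [hev, hev, neg_add, zpow_add₀ ht2, neg_neg, zpow_one]
  have hT1 : Top 1 = t2 • 1 := by
    apply mul_left_cancel₀ X2_ne
    rw [hT, hS1, sub_self, smul_zero, add_zero, mul_smul_comm]
  obtain ⟨c, hc⟩ : ∃ c, c = t2 - t2⁻¹ := ⟨_, rfl⟩
  have hct : c * t2 + 1 = t2 * t2 := by rw [hc]; field_simp; ring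
  rw [← hc] at hT
  have hTx : ∀ f, Top (Xm 1 * f) = Xm (-1) * Top f - c • (Xm (-1) * f) := by
    intro f
    apply mul_left_cancel₀ X2_ne
    have e1 : (Xm 1 : V) = Xm (-1) * Xm 2 := by rw [Xm_mul]; norm_num
    have h2 := hT f
    rw [hT, hSx, mul_sub, mul_left_comm (Xm 2 - 1) (Xm (-1)) (Top f), h2, e1]
    simp only [LaurentPolynomial.smul_eq_C_mul]
    ring
  have hTy : ∀ f, Top (Xm (-1) * f) = Xm 1 * Top f + c • (Xm (-1) * f) := by
    intro f
    have := hTx (Xm (-1) * f)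
    rw [xy] at this
    rw [this, mul_sub, xy, mul_smul_comm, xy, sub_add_cancel]
  have hTT : ∀ f, Top (Top f) = c • Top f + f := by
    intro f
    induction f using V_ind with
    | h1 =>
      rw [hT1, map_smul, hT1, smul_smul, smul_smul, ← hct, add_smul, one_smul]
    | hadd f g hf hg => rw [map_add, map_add, hf, hg, smul_add]; abel
    | hsmul d f hf => rw [map_smul, map_smul, hf, smul_add, smul_comm c d]
    | hx f hf =>
      rw [hTx, map_sub, map_smul, hTy, hTy, hf]
      simp only [mul_add, mul_sub, smul_add, smul_sub, mul_smul_comm]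
      abel
    | hy f hf =>
      rw [hTy, map_add, map_smul, hTx, hf, hTy]
      simp only [mul_add, mul_sub, smul_add, smul_sub, mul_smul_comm]
      abel
  have heT : ∀ f, ev (Top f) = t2 * ev f := by
    intro f
    induction f using V_ind with
    | h1 => rw [hT1, map_smul, smul_eq_mul]
    | hadd f g hf hg => rw [map_add, map_add, map_add, hf, hg, mul_add]
    | hsmul d f hf => rw [map_smul, map_smul, map_smul, hf, smul_eq_mul, smul_eq_mul]; ring
    | hx f hf =>
      rw [hTx, map_sub, map_smul, hey, hey, hf, hex, smul_eq_mul]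
      field_simp
      linear_combination (-ev f) * hct
    | hy f hf =>
      rw [hTy, map_add, map_smul, hex, hey, hf, smul_eq_mul]
      field_simp
      linear_combination (ev f) * hct
  have hYf : ∀ f, Y f = Pi (Top f) := by intro f; rw [hY]; rfl
  obtain ⟨Z, hZ⟩ : ∃ Z, Z = Yz (-1) := ⟨_, rfl⟩
  have hYZ : ∀ f, Y (Z f) = f := by
    intro f
    have := hYzadd 1 (-1)
    rw [hYz1, ← hZ] at this
    have h2 := LinearMap.congr_fun this f
    norm_num [hYz0] at h2
    exact h2.symm
  have hZY : ∀ f, Z (Y f) = f := by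
    intro f
    have := hYzadd (-1) 1
    rw [hYz1, ← hZ] at this
    have h2 := LinearMap.congr_fun this f
    norm_num [hYz0] at h2
    exact h2.symm
  have hp1 : ∀ g, pair 1 g = ev g := by
    intro g
    have := hpair 0 g
    simpa [Xm_zero, hYz0] using this
  -- adjoint of X
  have pX : ∀ f g, pair (Xm 1 * f) g = pair f (Z g) := by
    intro f g
    refine LaurentPolynomial.induction_on' f ?_ ?_
    · intro p q hp hq
      rw [mul_add, map_add, LinearMap.add_apply, hp, hq, map_add, LinearMap.add_apply]
    · intro m a
      have e : (LaurentPolynomial.C a * LaurentPolynomial.T m : V) = a • Xm m := by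
        rw [LaurentPolynomial.smul_eq_C_mul]; rfl
      rw [e, mul_smul_comm, map_smul, Xm_mul, map_smul, LinearMap.smul_apply,
        LinearMap.smul_apply, hpair, hpair, neg_add, add_comm, hYzadd, hZ]
      rfl
  have pXi : ∀ f g, pair (Xm (-1) * f) g = pair f (Y g) := by
    intro f g
    have := pX (Xm (-1) * f) (Y g)
    rw [xy, hZY] at this
    exact this.symm
  -- relations
  have hYT : ∀ f, Y (Top f) = Top (Z f) + c • Y f := by
    intro f
    obtain ⟨g, rfl⟩ : ∃ g, f = Y g := ⟨Z f, (hYZ f).symm⟩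
    rw [hZY, hYf (Top (Y g)), hTT, map_add, map_smul, ← hYf, hYf g, hPP, add_comm]
  have hTY : ∀ f, Top (Y f) - c • Y f = Z (Top f) := by
    intro f
    have h := hYT (Y f)
    rw [hZY] at h
    have h2 : Y (Top (Y f) - c • Y f) = Top f := by
      rw [map_sub, map_smul, h, add_sub_cancel_right]
    rw [← h2, hZY]
  have pT : ∀ f g, pair (Top f) g = pair f (Top g) := by
    intro f
    induction f using V_ind with
    | h1 => intro g; rw [hT1, map_smul, LinearMap.smul_apply, hp1, hp1, heT, smul_eq_mul]
    | hadd f g hf hg => intro k; simp only [map_add, LinearMap.add_apply, hf, hg]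
    | hsmul d f hf => intro k; simp only [map_smul, LinearMap.smul_apply, hf]
    | hx f hf =>
      intro g
      rw [hTx, map_sub, map_smul, LinearMap.sub_apply, LinearMap.smul_apply, pXi, pXi, hf, pX,
        ← hTY, map_sub, map_smul]
    | hy f hf =>
      intro g
      rw [hTy, map_add, map_smul, LinearMap.add_apply, LinearMap.smul_apply, pXi, pX, hf, pXi,
        hYT, map_add, map_smul]
  have hTXT : ∀ f, Top (Xm 1 * Top f) = Xm (-1) * f := by
    intro f
    rw [hTx, hTT, mul_add, mul_smul_comm]; abel
  have hR : ∀ g, Xm 1 * Top g = q2 • Y (Xm 1 * Top (Y g)) := by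
    intro g
    rw [hYf (Xm 1 * Top (Y g)), hTXT, hPy, hYf, hPP, smul_smul, mul_inv_cancel₀ hq2, one_smul]
  have pPi : ∀ f g, pair (Pi f) g = pair f (Xm 1 * Top g) := by
    intro f
    induction f using V_ind with
    | h1 =>
      intro g
      rw [hP1, hp1, hp1, hex, heT, inv_mul_cancel_left₀ ht2]
    | hadd f g hf hg => intro k; simp only [map_add, LinearMap.add_apply, hf, hg]
    | hsmul d f hf => intro k; simp only [map_smul, LinearMap.smul_apply, hf]
    | hx f hf =>
      intro g
      rw [hPx, map_smul, LinearMap.smul_apply, pXi, hf, pX, hR g, map_smul, hZY, map_smul]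
    | hy f hf =>
      intro g
      have h := hR (Z g)
      rw [hYZ] at h
      rw [hPy, map_smul, LinearMap.smul_apply, pX, hf, pXi, h, map_smul, smul_smul,
        inv_mul_cancel₀ hq2, one_smul]
  have pY : ∀ f g, pair (Y f) g = pair f (Xm (-1) * g) := by
    intro f g; rw [hYf, pPi, pT, hTXT]
  have pZ : ∀ f g, pair (Z f) g = pair f (Xm 1 * g) := by
    intro f g
    have := pY (Z f) (Xm 1 * g)
    rw [hYZ, yx] at this
    exact this.symm
  have hY1 : Y 1 = t2 • 1 := by rw [hYf, hT1, map_smul, hP1]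
  have hZ1 : Z 1 = t2⁻¹ • 1 := by
    have h := hZY 1
    rw [hY1, map_smul] at h
    rw [← h, smul_smul, inv_mul_cancel₀ ht2, one_smul, h]
  have pf1 : ∀ f, pair f 1 = ev f := by
    intro f
    induction f using V_ind with
    | h1 => rw [hp1]
    | hadd f g hf hg => simp only [map_add, LinearMap.add_apply, hf, hg]
    | hsmul d f hf => simp only [map_smul, LinearMap.smul_apply, hf]
    | hx f hf => rw [pX, hZ1, map_smul, hf, hex, smul_eq_mul]
    | hy f hf => rw [pXi, hY1, map_smul, hf, hey, smul_eq_mul]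
  have psymm : ∀ g f, pair f g = pair g f := by
    intro g
    induction g using V_ind with
    | h1 => intro f; rw [pf1, hp1]
    | hadd f g hf hg => intro k; simp only [map_add, LinearMap.add_apply, hf, hg]
    | hsmul d f hf => intro k; simp only [map_smul, LinearMap.smul_apply, hf]
    | hx g hg => intro f; rw [← pZ, hg, pX]
    | hy g hg => intro f; rw [← pY, hg, pXi]
  have memR : ∀ f, f ∈ Rad pair ↔ ∀ g, pair f g = 0 := by
    intro f
    unfold Rad
    rw [LinearMap.mem_ker]
    exact ⟨fun h g => by rw [h]; rfl, fun h => LinearMap.ext h⟩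
  have RY : Rad pair ≤ (Rad pair).comap Y := by
    intro f hf
    rw [Submodule.mem_comap, memR]
    rw [memR] at hf
    intro g; rw [pY, hf]
  have RZ : ∀ f ∈ Rad pair, Z f ∈ Rad pair := by
    intro f hf
    rw [memR] at hf ⊢
    intro g; rw [pZ, hf]
  have Rev : ∀ f ∈ Rad pair, ev f = 0 := by
    intro f hf
    rw [memR] at hf
    rw [← pf1, hf]
  have key : ∀ (d : ℂ) (E : V), Y E - d • E ∈ Rad pair → ev E = 0 → E ∈ Rad pair := by
    intro d E hE h0
    by_cases hd : d = 0
    · rw [hd, zero_smul, sub_zero] at hE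
      have := RZ _ hE
      rwa [hZY] at this
    have hE' : Z E - d⁻¹ • E ∈ Rad pair := by
      have h := (Rad pair).smul_mem (-d⁻¹) (RZ _ hE)
      rw [map_sub, map_smul, hZY, smul_sub, smul_smul, neg_mul, inv_mul_cancel₀ hd] at h
      convert h using 1
      module
    have hall : ∀ f g, g - (0:V) ∈ Submodule.span ℂ {E} ⊔ Rad pair → pair f g = 0 := by
      intro f
      have h1 : ∀ g ∈ Submodule.span ℂ {E} ⊔ Rad pair, ev g = 0 := by
        intro g hg
        obtain ⟨a, ha, b, hb, rfl⟩ := Submodule.mem_sup.1 hg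
        obtain ⟨k, rfl⟩ := Submodule.mem_span_singleton.1 ha
        rw [map_add, map_smul, h0, Rev b hb, smul_zero, add_zero]
      have h2 : ∀ g ∈ Submodule.span ℂ {E} ⊔ Rad pair, Y g ∈ Submodule.span ℂ {E} ⊔ Rad pair := by
        intro g hg
        obtain ⟨a, ha, b, hb, rfl⟩ := Submodule.mem_sup.1 hg
        obtain ⟨k, rfl⟩ := Submodule.mem_span_singleton.1 ha
        refine Submodule.mem_sup.2 ⟨(k * d) • E,
          Submodule.mem_span_singleton.2 ⟨_, rfl⟩, k • (Y E - d • E) + Y b,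
          (Rad pair).add_mem ((Rad pair).smul_mem _ hE) (RY hb), ?_⟩
        rw [map_add, map_smul]; module
      have h3 : ∀ g ∈ Submodule.span ℂ {E} ⊔ Rad pair, Z g ∈ Submodule.span ℂ {E} ⊔ Rad pair := by
        intro g hg
        obtain ⟨a, ha, b, hb, rfl⟩ := Submodule.mem_sup.1 hg
        obtain ⟨k, rfl⟩ := Submodule.mem_span_singleton.1 ha
        refine Submodule.mem_sup.2 ⟨(k * d⁻¹) • E,
          Submodule.mem_span_singleton.2 ⟨_, rfl⟩, k • (Z E - d⁻¹ • E) + Z b,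
          (Rad pair).add_mem ((Rad pair).smul_mem _ hE') (RZ _ hb), ?_⟩
        rw [map_add, map_smul]; module
      simp only [sub_zero]
      induction f using V_ind with
      | h1 => intro g hg; rw [hp1, h1 g hg]
      | hadd f g hf hg => intro k hk; rw [map_add, LinearMap.add_apply, hf k hk, hg k hk, add_zero]
      | hsmul d f hf => intro k hk; rw [map_smul, LinearMap.smul_apply, hf k hk, smul_zero]
      | hx f hf => intro g hg; rw [pX, hf _ (h3 g hg)]
      | hy f hf => intro g hg; rw [pXi, hf _ (h2 g hg)]
    rw [memR]
    intro g
    rw [psymm]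
    apply hall
    rw [sub_zero]
    exact Submodule.mem_sup_left (Submodule.mem_span_singleton_self E)
  have hq : ∀ (d : ℂ) (E : V),
      (Rad pair).mapQ (Rad pair) Y RY ((Rad pair).mkQ E) = d • (Rad pair).mkQ E →
        Y E - d • E ∈ Rad pair := by
    intro d E h
    rw [← map_smul, Submodule.mkQ_apply, Submodule.mapQ_apply, Submodule.mkQ_apply] at h
    exact (Submodule.Quotient.eq _).1 h
  have h0 : ∀ E : V, (Rad pair).mkQ E = 0 ↔ E ∈ Rad pair := by
    intro E
    rw [Submodule.mkQ_apply, Submodule.Quotient.mk_eq_zero]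
  refine ⟨?_, RY, ?_, ?_⟩
  · intro f hf
    rw [memR] at hf
    simp only [memR]
    exact ⟨fun g => by rw [pT, hf], fun g => by rw [pPi, hf], fun g => by rw [pX, hf]⟩
  · intro d v w hv hw hne
    obtain ⟨E, rfl⟩ := (Rad pair).mkQ_surjective v
    obtain ⟨F, rfl⟩ := (Rad pair).mkQ_surjective w
    have hE := hq d E hv
    have hF := hq d F hw
    have hevE : ev E ≠ 0 := fun h => hne ((h0 E).2 (key d E hE h))
    refine ⟨ev F / ev E, ?_⟩
    have hG : F - (ev F / ev E) • E ∈ Rad pair := by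
      apply key d
      · have h := (Rad pair).sub_mem hF ((Rad pair).smul_mem (ev F / ev E) hE)
        convert h using 1
        rw [map_sub, map_smul]; module
      · rw [map_sub, map_smul, smul_eq_mul, div_mul_cancel₀ _ hevE, sub_self]
    have := (h0 _).2 hG
    rwa [map_sub, map_smul, sub_eq_zero] at this
  · rintro E hE ⟨d, hd⟩ h
    exact hE ((h0 E).2 (key d E (hq d E hd) h))
end
end
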